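/- arXiv:math/9809185 — 2 statements merged into one kernel-verified Lean document; each statement's English description precedes it below -/
import Mathlib

section
/- Let p ≥ 2 be an integer and let x ∈ F(p) have normal form x = x_{i₁}^{r₁}·x_{i₂}^{r₂}⋯x_{iₙ}^{rₙ}·x_{jₘ}^{-sₘ}⋯x_{j₂}^{-s₂}·x_{j₁}^{-s₁}, and set D(x) = r₁+⋯+rₙ + s₁+⋯+sₘ + iₙ + jₘ. Then D(x)/(3(p−1)) ≤ |x|_p ≤ 3·D(x). -/
open scoped BigOperators

/-- Relators of Thompson's group `F(p)`: `x_i⁻¹ x_j x_i x_{j+p-1}⁻¹` for `i < j`. -/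
def thompsonRels (p : ℕ) : Set (FreeGroup ℕ) :=
  { rel | ∃ i j : ℕ, i < j ∧
      rel = (FreeGroup.of i)⁻¹ * FreeGroup.of j * FreeGroup.of i *
        (FreeGroup.of (j + p - 1))⁻¹ }

/-- Thompson's group `F(p)`, presented with generators `x_i` (`i : ℕ`) and relations
`x_i⁻¹ · x_j · x_i = x_{j+p-1}` for `i < j`. -/
def FP (p : ℕ) : Type := PresentedGroup (thompsonRels p)

instance (p : ℕ) : Group (FP p) :=
  inferInstanceAs (Group (PresentedGroup (thompsonRels p)))

/-- The generator `x_i` of `F(p)`. -/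
def xg (p : ℕ) (i : ℕ) : FP p := PresentedGroup.of (rels := thompsonRels p) i

/-- Word length of `x : G` with respect to a set `S` of generators: the least length of a
word in elements of `S ∪ S⁻¹` whose product is `x`. -/
noncomputable def wordLength {G : Type*} [Group G] (S : Set G) (x : G) : ℕ :=
  sInf { n : ℕ | ∃ w : List G, w.length = n ∧ (∀ g ∈ w, g ∈ S ∨ g⁻¹ ∈ S) ∧ w.prod = x }

/-- The word length `|x|_p` on `F(p)`, with respect to the generators `x_0, …, x_{p-1}`. -/
noncomputable def wlen (p : ℕ) (x : FP p) : ℕ :=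
  wordLength { g : FP p | ∃ i, i < p ∧ g = xg p i } x

/-- The data of a candidate normal form
`x_{i₁}^{r₁} ⋯ x_{iₙ}^{rₙ} · x_{jₘ}^{-sₘ} ⋯ x_{j₁}^{-s₁}` in `F(p)`. -/
structure NFData (p : ℕ) where
  n : ℕ
  m : ℕ
  i : Fin n → ℕ
  r : Fin n → ℕ
  j : Fin m → ℕ
  s : Fin m → ℕ

namespace NFData

variable {p : ℕ}

/-- The element of `F(p)` represented by the normal form data, namely
`x_{i₁}^{r₁} ⋯ x_{iₙ}^{rₙ} · (x_{j₁}^{s₁} ⋯ x_{jₘ}^{sₘ})⁻¹`. -/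
def elem (d : NFData p) : FP p :=
  (List.ofFn fun k => xg p (d.i k) ^ d.r k).prod *
    ((List.ofFn fun l => xg p (d.j l) ^ d.s l).prod)⁻¹

/-- The generator with index `a` occurs in `d` (with positive or negative exponent). -/
def Occurs (d : NFData p) (a : ℕ) : Prop :=
  (∃ k, d.i k = a) ∨ (∃ l, d.j l = a)

/-- `d` is a normal form of `x ∈ F(p)`: the indices are strictly increasing, the exponents
are at least `1`, `iₙ ≠ jₘ` when both parts are nonempty, whenever a generator and its
inverse both occur one of the following `p-1` generators (or its inverse) occurs as well,
and the corresponding product equals `x`. -/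
def IsNormalFormOf (d : NFData p) (x : FP p) : Prop :=
  StrictMono d.i ∧ StrictMono d.j ∧
    (∀ k, 1 ≤ d.r k) ∧ (∀ l, 1 ≤ d.s l) ∧
    (∀ (hn : 0 < d.n) (hm : 0 < d.m),
      d.i ⟨d.n - 1, Nat.sub_lt hn Nat.one_pos⟩ ≠ d.j ⟨d.m - 1, Nat.sub_lt hm Nat.one_pos⟩) ∧
    (∀ a : ℕ, (∃ k, d.i k = a) → (∃ l, d.j l = a) →
      ∃ b : ℕ, a < b ∧ b ≤ a + p - 1 ∧ d.Occurs b) ∧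
    x = d.elem

/-- The quantity `D(x) = r₁ + ⋯ + rₙ + s₁ + ⋯ + sₘ + iₙ + jₘ` (the terms `iₙ`, `jₘ` being
omitted when `n = 0`, resp. `m = 0`). -/
def D (d : NFData p) : ℕ :=
  (∑ k, d.r k) + (∑ l, d.s l) +
    (if hn : 0 < d.n then d.i ⟨d.n - 1, Nat.sub_lt hn Nat.one_pos⟩ else 0) +
    (if hm : 0 < d.m then d.j ⟨d.m - 1, Nat.sub_lt hm Nat.one_pos⟩ else 0)

end NFData

/-- The tail sum `r_k + r_{k+1} + ⋯ + r_n`. -/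
def tailSum {n : ℕ} (r : Fin n → ℕ) (k : Fin n) : ℕ :=
  ∑ l ∈ Finset.univ.filter (fun l => k ≤ l), r l
/-- `N(x)` associated to a normal form in `F(2)` (Theorem 3):
the maximum of `i_k + r_k + ⋯ + r_n + 1` and `j_l + s_l + ⋯ + s_m + 1`. -/
def NFData.N2 (d : NFData 2) : ℕ :=
  max (Finset.univ.sup fun k => d.i k + tailSum d.r k + 1)
      (Finset.univ.sup fun l => d.j l + tailSum d.s l + 1)

/-- `N(x)` associated to a normal form in `F(p)` (Theorem 6):
the maximum of `⌊i_k/(p-1)⌋ + r_k + ⋯ + r_n + 1` and `⌊j_l/(p-1)⌋ + s_l + ⋯ + s_m + 1`. -/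
def NFData.Ngen {p : ℕ} (d : NFData p) : ℕ :=
  max (Finset.univ.sup fun k => d.i k / (p - 1) + tailSum d.r k + 1)
      (Finset.univ.sup fun l => d.j l / (p - 1) + tailSum d.s l + 1)

/-- `N(x) = max { i_k + r_k + ⋯ + r_n + 1 }` for a positive word (Proposition 2). -/
def posN {n : ℕ} (i r : Fin n → ℕ) : ℕ :=
  Finset.univ.sup fun k => i k + tailSum r k + 1

/-- `N₁(x) = max { ⌊i_k/(p-1)⌋ + r_k + ⋯ + r_n + 1 }` (Proposition 4). -/
def posN1 (p : ℕ) {n : ℕ} (i r : Fin n → ℕ) : ℕ :=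
  Finset.univ.sup fun k => i k / (p - 1) + tailSum r k + 1

/-- `N₂(x) = max { i_k + (p-1)(r_k + ⋯ + r_n) + 1 }` (Proposition 5). -/
def posN2 (p : ℕ) {n : ℕ} (i r : Fin n → ℕ) : ℕ :=
  Finset.univ.sup fun k => i k + (p - 1) * tailSum r k + 1

/-- `x ∈ ℤ[1/p]`. -/
def IsPAdicRational (p : ℕ) (x : ℝ) : Prop :=
  ∃ (a : ℤ) (n : ℕ), x = (a : ℝ) / (p : ℝ) ^ n

/-- Thompson's group `F(p)` realized as a set of permutations of `ℝ`: orientation-preserving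
piecewise-linear homeomorphisms of `[0,1]` (extended by the identity outside `[0,1]`) with
finitely many breakpoints, all in `ℤ[1/p]`, whose slopes are integer powers of `p`. -/
def PLSet (p : ℕ) : Set (Equiv.Perm ℝ) :=
  { f | Monotone f ∧ (∀ t : ℝ, t ≤ 0 → f t = t) ∧ (∀ t : ℝ, 1 ≤ t → f t = t) ∧
    ∃ B : Finset ℝ, (∀ b ∈ B, IsPAdicRational p b) ∧
      ∀ t : ℝ, t ∉ (B : Set ℝ) →
        ∃ ε > (0 : ℝ), ∃ (k : ℤ) (c : ℝ), ∀ s : ℝ, |s - t| < ε → f s = (p : ℝ) ^ k * s + c }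

/-- The map `Φ_p` on homeomorphisms: `(Φ_p f)(t) = t` for `t ≤ 1 - 1/p`, and
`(Φ_p f)(t) = ((p-1) + f(pt - (p-1)))/p` for `t ≥ 1 - 1/p`. -/
noncomputable def PhiMap (p : ℕ) (f : ℝ → ℝ) : ℝ → ℝ := fun t =>
  if t ≤ 1 - 1 / (p : ℝ) then t
  else (((p : ℝ) - 1) + f ((p : ℝ) * t - ((p : ℝ) - 1))) / (p : ℝ)

/-- The piecewise-linear homeomorphism `f_i` of `ℝ` corresponding to the generator `x_i`
of `F(p)`. -/
noncomputable def fgen (p : ℕ) (i : ℕ) : ℝ → ℝ := fun t =>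
  if t ≤ (i : ℝ) then t
  else if t ≤ (i : ℝ) + 1 then (p : ℝ) * t + (i : ℝ) * (1 - (p : ℝ))
  else t + (p : ℝ) - 1
/-!
A word of length `n` in the generators is a fraction `P N⁻¹` of positive words with at most `n`
letters in total: multiplying by a further letter `x_i`, one moves it past `N⁻¹` by the Ore
condition. Sorting `P` and `N` by the relations, and then cancelling `x_a` whenever it occurs in
both and no letter in `(a, a + q]` occurs (`q = p - 1`), gives a normal form. The statistic
`height`, which bounds all letters, is invariant under sorting, does not grow under cancellation,
and is at most `q n` for the fraction one starts from. So both words of this normal form have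
letters at most `q n` and together at most `n` letters, whence `D ≤ n + 2 q n ≤ 3 q n`.

To apply this to a given normal form one needs its uniqueness. Let `F(p)` act on `ℝ` by
piecewise-linear maps. If `a` is the smallest letter that occurs, the slope of `P N⁻¹` to the right
of `a` is `p⁻¹` to the power of the difference of the multiplicities of `a` in `P` and in `N`. Two
normal forms of one element therefore differ, as far as `a` is concerned, by a factor `x_a ^ j` on
both sides; conjugation by it raises all other letters by `j q`, so that the normal form condition
at `a` fails unless `j = 0`.

For the upper bound, `x_0⁻¹ x_b x_0 = x_{b+q}` lets a sorted word with letters up to `(k + 1) q` be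
written with `2 k` additional letters `x_0 ^ ±1`.
-/

namespace ThompsonGroup

section WordBall

open scoped Pointwise

variable {G : Type*} [Group G] {S : Set G} {g h : G} {m n : ℕ}

/-- The ball of radius `n` about `1` in the word metric of `S`. Adding `1` to the letters turns
products of *at most* `n` letters into a power of a set. -/
def wordBall (S : Set G) (n : ℕ) : Set G := insert 1 (S ∪ S⁻¹) ^ n

theorem mem_wordBall_zero_iff : g ∈ wordBall S 0 ↔ g = 1 := by
  simp [wordBall]

theorem one_mem_wordBall : (1 : G) ∈ wordBall S n :=
  Set.one_mem_pow (Set.mem_insert _ _)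

theorem mem_wordBall_one (hg : g ∈ S) : g ∈ wordBall S 1 := by
  simp [wordBall, hg]

theorem mul_mem_wordBall (hg : g ∈ wordBall S m) (hh : h ∈ wordBall S n) :
    g * h ∈ wordBall S (m + n) := by
  rw [wordBall, pow_add]
  exact Set.mul_mem_mul hg hh

theorem inv_mem_wordBall (hg : g ∈ wordBall S n) : g⁻¹ ∈ wordBall S n := by
  have symm : (insert 1 (S ∪ S⁻¹))⁻¹ = insert 1 (S ∪ S⁻¹) := by
    rw [Set.inv_insert, inv_one, Set.union_inv, inv_inv, Set.union_comm]
  rwa [wordBall, ← symm, inv_pow, Set.inv_mem_inv]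

theorem wordBall_mono (hmn : m ≤ n) : wordBall S m ⊆ wordBall S n :=
  Set.pow_subset_pow_right (Set.mem_insert _ _) hmn

theorem mem_wordBall_succ_iff :
    g ∈ wordBall S (n + 1) ↔ ∃ h ∈ wordBall S n, ∃ s, (s = 1 ∨ s ∈ S ∨ s⁻¹ ∈ S) ∧ h * s = g := by
  simp only [wordBall, pow_succ, Set.mem_mul, Set.mem_insert_iff, Set.mem_union, Set.mem_inv]

theorem list_prod_mem_wordBall {w : List G} (hw : ∀ s ∈ w, s ∈ S ∨ s⁻¹ ∈ S) :
    w.prod ∈ wordBall S w.length := by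
  induction w with
  | nil => exact one_mem_wordBall
  | cons s w ih =>
    obtain ⟨hs, hw⟩ := List.forall_mem_cons.1 hw
    have hs : s ∈ wordBall S 1 := hs.elim mem_wordBall_one fun hs ↦ by
      simpa using inv_mem_wordBall (mem_wordBall_one hs)
    rw [List.prod_cons, List.length_cons, Nat.add_comm]
    exact mul_mem_wordBall hs (ih hw)

theorem exists_list_of_mem_wordBall (hg : g ∈ wordBall S n) :
    ∃ w : List G, w.length ≤ n ∧ (∀ s ∈ w, s ∈ S ∨ s⁻¹ ∈ S) ∧ w.prod = g := by
  induction n generalizing g with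
  | zero => exact ⟨[], by simp, by simp, (mem_wordBall_zero_iff.1 hg).symm⟩
  | succ n ih =>
    obtain ⟨h, hh, s, hs, rfl⟩ := mem_wordBall_succ_iff.1 hg
    obtain ⟨w, hlen, hw, rfl⟩ := ih hh
    obtain rfl | hs := hs
    · exact ⟨w, by lia, hw, (mul_one _).symm⟩
    · refine ⟨w ++ [s], by simpa using hlen, ?_, by simp⟩
      simpa [or_imp, forall_and] using ⟨hw, hs⟩

theorem wordLength_le_of_mem_wordBall (hg : g ∈ wordBall S n) : wordLength S g ≤ n := by
  obtain ⟨w, hlen, hw, hprod⟩ := exists_list_of_mem_wordBall hg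
  have hle : wordLength S g ≤ w.length := Nat.sInf_le ⟨w, rfl, hw, hprod⟩
  exact hle.trans hlen

theorem mem_wordBall_wordLength (hg : g ∈ wordBall S n) : g ∈ wordBall S (wordLength S g) := by
  obtain ⟨w, -, hw, hprod⟩ := exists_list_of_mem_wordBall hg
  have attained : wordLength S g ∈ { n | ∃ v : List G, v.length = n ∧
      (∀ s ∈ v, s ∈ S ∨ s⁻¹ ∈ S) ∧ v.prod = g } := Nat.sInf_mem ⟨w.length, w, rfl, hw, hprod⟩
  obtain ⟨v, hlen, hv, hv_prod⟩ := attained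
  rw [← hlen, ← hv_prod]
  exact list_prod_mem_wordBall hv

end WordBall

section SortedLists

theorem exists_eq_append_of_sortedLE {α : Type*} [LinearOrder α] {l : List α} (hl : l.SortedLE)
    (a : α) : ∃ s t, l = s ++ t ∧ (∀ b ∈ s, b ≤ a) ∧ ∀ b ∈ t, a < b := by
  induction l with
  | nil => exact ⟨[], [], by simp⟩
  | cons c l ih =>
    obtain ⟨hcl, hl⟩ := List.pairwise_cons.1 hl.pairwise
    obtain hca | hac := le_or_gt c a
    · obtain ⟨s, t, rfl, hs, ht⟩ := ih hl.sortedLE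
      exact ⟨c :: s, t, rfl, List.forall_mem_cons.2 ⟨hca, hs⟩, ht⟩
    · exact ⟨[], c :: l, rfl, by simp,
        List.forall_mem_cons.2 ⟨hac, fun b hb ↦ hac.trans_le (hcl b hb)⟩⟩

theorem exists_eq_replicate_count_append {α : Type*} [LinearOrder α] {l : List α} (hl : l.SortedLE)
    {a : α} (ha : ∀ b ∈ l, a ≤ b) :
    ∃ t, l = List.replicate (l.count a) a ++ t ∧ ∀ b ∈ t, a < b := by
  obtain ⟨s, t, rfl, hs, ht⟩ := exists_eq_append_of_sortedLE hl a
  obtain ⟨k, rfl⟩ : ∃ k, s = List.replicate k a :=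
    ⟨_, List.eq_replicate_of_mem fun b hb ↦ (hs b hb).antisymm (ha b (by simp [hb]))⟩
  have hat : a ∉ t := fun h ↦ (ht a h).false
  exact ⟨t, by simp [List.count_eq_zero_of_not_mem hat], ht⟩

theorem exists_map_add_eq {l : List ℕ} {k : ℕ} (hl : ∀ b ∈ l, k ≤ b) :
    ∃ l' : List ℕ, l'.map (· + k) = l := by
  rw [← Set.mem_range, Set.range_list_map]
  exact fun b hb ↦ ⟨b - k, Nat.sub_add_cancel (hl b hb)⟩

theorem sortedLE_map_add_iff {l : List ℕ} {k : ℕ} : (l.map (· + k)).SortedLE ↔ l.SortedLE := by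
  simp [List.sortedLE_iff_pairwise, List.pairwise_map]

/-- The letter removed is the last `a`. -/
theorem exists_eq_append_cons_map_add {q a : ℕ} {l : List ℕ} (hl : l.SortedLE) (ha : a ∈ l)
    (hgap : ∀ b, a < b → b ≤ a + q → b ∉ l) :
    ∃ s t : List ℕ, l = s ++ a :: t.map (· + q) ∧ (∀ b ∈ t, a < b) ∧ (s ++ t).SortedLE := by
  obtain ⟨s, t, rfl, hs, ht⟩ := exists_eq_append_of_sortedLE hl a
  have has : a ∈ s := (List.mem_append.1 ha).resolve_right fun h ↦ (ht a h).false
  have hs0 : s ≠ [] := List.ne_nil_of_mem has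
  obtain ⟨hss, htt, -⟩ := List.pairwise_append.1 hl.pairwise
  have hlast : s.getLast hs0 = a :=
    (hs _ (List.getLast_mem hs0)).antisymm (hss.rel_getLast has)
  have htq : ∀ b ∈ t, a + q < b := fun b hb ↦
    not_le.1 fun h ↦ hgap b (ht b hb) h (List.mem_append_right _ hb)
  obtain ⟨t, rfl⟩ := exists_map_add_eq (k := q) fun b hb ↦ by have := htq b hb; lia
  replace htq : ∀ b ∈ t, a < b := fun b hb ↦ by
    simpa using htq (b + q) (List.mem_map_of_mem hb)
  refine ⟨s.dropLast, t, by rw [← List.singleton_append, ← List.append_assoc, ← hlast,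
    List.dropLast_concat_getLast], htq, List.Pairwise.sortedLE ?_⟩
  refine List.pairwise_append.2 ⟨hss.sublist s.dropLast_sublist,
    (sortedLE_map_add_iff.1 htt.sortedLE).pairwise, fun b hb c hc ↦ ?_⟩
  exact (hs b (List.mem_of_mem_dropLast hb)).trans (htq c hc).le

end SortedLists

section Height

/-- The largest value of `a + q * r`, where `a` is a letter of the word and `r` is the number of
letters after it (`0` for the empty word). It does not change when the relation
`x_j x_i = x_i x_{j+q}`, `i < j`, is applied. For the sorted word of a nonempty positive normal form
it is `posN2 - (q + 1)`. -/
def height (q : ℕ) : List ℕ → ℕ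
  | [] => 0
  | a :: l => max (a + q * l.length) (height q l)

variable {q a : ℕ} {l : List ℕ}

theorem le_height_of_mem (ha : a ∈ l) : a ≤ height q l := by
  induction l with
  | nil => simp at ha
  | cons b l ih =>
    obtain rfl | ha := List.mem_cons.1 ha
    · exact (Nat.le_add_right _ _).trans (le_max_left _ _)
    · exact (ih ha).trans (le_max_right _ _)

theorem height_append_singleton_le : height q (l ++ [a]) ≤ max (height q l + q) a := by
  induction l with
  | nil => simp [height]
  | cons b l ih =>
    simp only [List.cons_append, height, List.length_append, List.length_singleton, mul_add]
    lia

theorem height_le_height_map_add (k : ℕ) : height q l ≤ height q (l.map (· + k)) := by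
  induction l with
  | nil => rfl
  | cons b l ih =>
    simp only [List.map_cons, height, List.length_map]
    lia

theorem height_append_le_height_append {s t t' : List ℕ} (hlen : t.length ≤ t'.length)
    (ht : height q t ≤ height q t') : height q (s ++ t) ≤ height q (s ++ t') := by
  induction s with
  | nil => exact ht
  | cons b s ih =>
    have := Nat.mul_le_mul_left q (Nat.add_le_add_left hlen s.length)
    simp only [List.cons_append, height, List.length_append]
    lia

end Height

section Relations

/-- The relations `x_i⁻¹ x_j x_i = x_{j+q}`, `i < j`, of Thompson's group `F(q + 1)`, in a form
that makes sense for a family of elements of a monoid. -/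
def ThompsonRelations {M : Type*} [Monoid M] (q : ℕ) (x : ℕ → M) : Prop :=
  ∀ ⦃i j : ℕ⦄, i < j → x j * x i = x i * x (j + q)

namespace ThompsonRelations

variable {M : Type*} [Monoid M] {q : ℕ} {x : ℕ → M} {a : ℕ} {l : List ℕ}

theorem prod_mul (hx : ThompsonRelations q x) (hl : ∀ b ∈ l, a < b) :
    (l.map x).prod * x a = x a * ((l.map (· + q)).map x).prod := by
  induction l with
  | nil => simp
  | cons b l ih =>
    obtain ⟨hab, hl⟩ := List.forall_mem_cons.1 hl
    simp only [List.map_cons, List.prod_cons]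
    rw [mul_assoc, ih hl, ← mul_assoc, hx hab, mul_assoc]

theorem prod_mul_pow (hx : ThompsonRelations q x) (hl : ∀ b ∈ l, a < b) (k : ℕ) :
    (l.map x).prod * x a ^ k = x a ^ k * ((l.map (· + k * q)).map x).prod := by
  induction k with
  | zero => simp
  | succ k ih =>
    have hshift : ∀ b ∈ l.map (· + k * q), a < b := by
      simpa using fun b hb ↦ (hl b hb).trans_le (Nat.le_add_right _ _)
    rw [pow_succ, ← mul_assoc, ih, mul_assoc, hx.prod_mul hshift, mul_assoc, List.map_map (l := l)]
    simp only [Function.comp_def, add_assoc, Nat.succ_mul]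

end ThompsonRelations

/-- Inserts the letter `a` into a sorted word from the left, moving it past smaller letters by
`x_a x_b = x_b x_{a+q}`, `b < a`. -/
def insertLetter (q : ℕ) : ℕ → List ℕ → List ℕ
  | a, [] => [a]
  | a, b :: l => if b < a then b :: insertLetter q (a + q) l else a :: b :: l

section InsertLetter

variable {q : ℕ} {a c : ℕ} {l : List ℕ}

theorem length_insertLetter : (insertLetter q a l).length = l.length + 1 := by
  induction l generalizing a with
  | nil => rfl
  | cons b l ih => grind [insertLetter]

theorem height_insertLetter : height q (insertLetter q a l) = height q (a :: l) := by
  induction l generalizing a with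
  | nil => rfl
  | cons b l ih =>
    rw [insertLetter]
    split_ifs with hba
    · simp only [height, ih, length_insertLetter, List.length_cons, mul_add]
      lia
    · rfl

theorem le_or_mem_of_mem_insertLetter (hc : c ∈ insertLetter q a l) : a ≤ c ∨ c ∈ l := by
  induction l generalizing a with
  | nil => exact .inl (List.mem_singleton.1 hc).ge
  | cons b l ih => grind [insertLetter]

theorem sortedLE_insertLetter (hl : l.SortedLE) : (insertLetter q a l).SortedLE := by
  induction l generalizing a with
  | nil => simp [insertLetter, List.sortedLE_iff_pairwise]
  | cons b l ih =>
    obtain ⟨hbl, hl'⟩ := List.pairwise_cons.1 hl.pairwise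
    rw [insertLetter]
    split_ifs with hba
    · refine (List.pairwise_cons.2 ⟨fun c hc ↦ ?_, (ih hl'.sortedLE).pairwise⟩).sortedLE
      obtain hac | hcl := le_or_mem_of_mem_insertLetter hc
      · lia
      · exact hbl c hcl
    · refine (List.pairwise_cons.2 ⟨fun c hc ↦ ?_, hl.pairwise⟩).sortedLE
      obtain rfl | hcl := List.mem_cons.1 hc
      · exact not_lt.1 hba
      · exact (not_lt.1 hba).trans (hbl c hcl)

end InsertLetter

namespace ThompsonRelations

variable {M : Type*} [Monoid M] {q : ℕ} {x : ℕ → M}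

theorem prod_insertLetter (hx : ThompsonRelations q x) (a : ℕ) (l : List ℕ) :
    ((insertLetter q a l).map x).prod = x a * (l.map x).prod := by
  induction l generalizing a with
  | nil => simp [insertLetter]
  | cons b l ih =>
    rw [insertLetter]
    split_ifs with hba
    · rw [List.map_cons, List.prod_cons, ih, ← mul_assoc, ← hx hba, mul_assoc, List.map_cons,
        List.prod_cons]
    · simp

theorem exists_sortedLE (hx : ThompsonRelations q x) (l : List ℕ) :
    ∃ l' : List ℕ, l'.SortedLE ∧ l'.length = l.length ∧ height q l' = height q l ∧
      (l'.map x).prod = (l.map x).prod := by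
  induction l with
  | nil => exact ⟨[], by simp [List.sortedLE_iff_pairwise], rfl, rfl, rfl⟩
  | cons a l ih =>
    obtain ⟨l', hsort, hlen, hheight, hprod⟩ := ih
    refine ⟨insertLetter q a l', sortedLE_insertLetter hsort, ?_, ?_, ?_⟩
    · rw [length_insertLetter, hlen, List.length_cons]
    · rw [height_insertLetter, height, height, hlen, hheight]
    · rw [hx.prod_insertLetter, hprod, List.map_cons, List.prod_cons]

/-- The Ore condition for the positive monoid: a letter and a word have a common right multiple. -/
theorem exists_letter_mul_eq_mul (hx : ThompsonRelations q x) (a : ℕ) (l : List ℕ) :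
    ∃ s t : List ℕ, x a * (t.map x).prod = (l.map x).prod * (s.map x).prod ∧
      s.length ≤ 1 ∧ (∀ c ∈ s, c ≤ a + q * l.length) ∧
      t.length ≤ l.length ∧ height q t ≤ height q l + q := by
  induction l generalizing a with
  | nil => exact ⟨[a], [], by simp [height]⟩
  | cons b l ih =>
    obtain hba | rfl | hab := lt_trichotomy b a
    · obtain ⟨s, t, hst, hs1, hs, ht, hheight⟩ := ih (a + q)
      have := Nat.mul_le_mul_left q ht
      refine ⟨s, b :: t, ?_, hs1, ?_⟩
      · simp only [List.map_cons, List.prod_cons]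
        rw [← mul_assoc, hx hba, mul_assoc, hst, mul_assoc]
      · simp only [List.length_cons, height, mul_add, mul_one]
        exact ⟨fun c hc ↦ by have := hs c hc; lia, by lia, by lia⟩
    · refine ⟨[], l, by simp, ?_⟩
      simp only [List.length_nil, List.not_mem_nil, List.length_cons, height]
      lia
    · obtain ⟨s, t, hst, hs1, hs, ht, hheight⟩ := ih a
      have := Nat.mul_le_mul_left q ht
      refine ⟨s, (b + q) :: t, ?_, hs1, ?_⟩
      · simp only [List.map_cons, List.prod_cons]
        rw [← mul_assoc, ← hx hab, mul_assoc, hst, mul_assoc]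
      · simp only [List.length_cons, height, mul_add, mul_one]
        exact ⟨fun c hc ↦ by have := hs c hc; lia, by lia, by lia⟩

end ThompsonRelations

end Relations

section Fractions

/-- The element `P N⁻¹` given by two positive words in the family `x`. -/
def fraction {G : Type*} [Group G] (x : ℕ → G) (P N : List ℕ) : G :=
  (P.map x).prod * (N.map x).prod⁻¹

/-- The first `p` members of the family `x`; for `F(p)` they are the generators counted by
`wlen`. -/
def initialGenerators {G : Type*} (x : ℕ → G) (p : ℕ) : Set G :=
  { g | ∃ i, i < p ∧ g = x i }

variable {G : Type*} [Group G] {q n : ℕ} {x : ℕ → G} {g : G} {P N : List ℕ}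

theorem map_fraction {H : Type*} [Group H] (φ : G →* H) :
    φ (fraction x P N) = fraction (φ ∘ x) P N := by
  simp [fraction, map_list_prod]

theorem fraction_replicate_append (a k l : ℕ) :
    fraction x (List.replicate k a ++ P) (List.replicate l a ++ N) =
      x a ^ k * fraction x P N * (x a ^ l)⁻¹ := by
  simp [fraction, mul_assoc]

theorem ThompsonRelations.fraction_map_add (hx : ThompsonRelations q x) {a : ℕ}
    (hP : ∀ b ∈ P, a < b) (hN : ∀ b ∈ N, a < b) (k : ℕ) :
    fraction x (P.map (· + k * q)) (N.map (· + k * q)) =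
      (x a ^ k)⁻¹ * fraction x P N * x a ^ k := by
  have conj : ∀ {l : List ℕ}, (∀ b ∈ l, a < b) →
      ((l.map (· + k * q)).map x).prod = (x a ^ k)⁻¹ * (l.map x).prod * x a ^ k := fun hl ↦ by
    rw [mul_assoc, hx.prod_mul_pow hl, inv_mul_cancel_left]
  rw [fraction, fraction, conj hP, conj hN]
  group

theorem ThompsonRelations.fraction_eq_of_fraction_replicate_append_eq (hx : ThompsonRelations q x)
    {P' N' : List ℕ} {a j k l : ℕ} (hP' : ∀ b ∈ P', a < b) (hN' : ∀ b ∈ N', a < b)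
    (h : fraction x (List.replicate (k + j) a ++ P) (List.replicate (l + j) a ++ N) =
      fraction x (List.replicate k a ++ P') (List.replicate l a ++ N')) :
    fraction x P N = fraction x (P'.map (· + j * q)) (N'.map (· + j * q)) := by
  rw [fraction_replicate_append, fraction_replicate_append, pow_add, pow_add, mul_inv_rev] at h
  simp only [← mul_assoc, mul_left_inj] at h
  simp only [mul_assoc, mul_right_inj] at h
  rw [hx.fraction_map_add hP' hN', ← h]
  group

theorem ThompsonRelations.exists_fraction_of_mem_wordBall (hx : ThompsonRelations q x)
    (hg : g ∈ wordBall (initialGenerators x (q + 1)) n) :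
    ∃ P N : List ℕ, P.length + N.length ≤ n ∧ height q P ≤ q * n ∧ height q N ≤ q * n ∧
      fraction x P N = g := by
  induction n generalizing g with
  | zero =>
    obtain rfl := mem_wordBall_zero_iff.1 hg
    exact ⟨[], [], by simp, by simp [height], by simp [height], by simp [fraction]⟩
  | succ n ih =>
    obtain ⟨h, hh, s, hs, rfl⟩ := mem_wordBall_succ_iff.1 hg
    obtain ⟨P, N, hlen, hP, hN, rfl⟩ := ih hh
    have hqN : q * N.length ≤ q * n := Nat.mul_le_mul_left q (by lia)
    rw [mul_add, mul_one]
    obtain rfl | ⟨i, hi, rfl⟩ | ⟨i, hi, hsi⟩ := hs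
    · exact ⟨P, N, by lia, by lia, by lia, (mul_one _).symm⟩
    · obtain ⟨s, t, hst, hs1, hs, ht, hheight⟩ := hx.exists_letter_mul_eq_mul i N
      refine ⟨P ++ s, t, by simp; lia, ?_, by lia, ?_⟩
      · match s, hs1 with
        | [], _ => simpa using by lia
        | [c], _ =>
          have := hs c (by simp)
          exact height_append_singleton_le.trans (by lia)
      · rw [fraction, fraction, List.map_append, List.prod_append, mul_assoc, mul_assoc,
          mul_right_inj, mul_inv_eq_iff_eq_mul, mul_assoc, hst, inv_mul_cancel_left]
    · refine ⟨P, i :: N, by simp; lia, by lia, by simp only [height]; lia, ?_⟩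
      rw [← inv_inv s, hsi]
      simp [fraction, mul_assoc]

end Fractions

section NormalPairs

/-- The pair of words `P`, `N` of a normal form `P N⁻¹`, without the requirement that the last
letters differ, which follows from `exists_between`. -/
structure IsNormalPair (q : ℕ) (P N : List ℕ) : Prop where
  sortedLE_left : P.SortedLE
  sortedLE_right : N.SortedLE
  exists_between : ∀ a ∈ P, a ∈ N → ∃ b, a < b ∧ b ≤ a + q ∧ (b ∈ P ∨ b ∈ N)

namespace IsNormalPair

variable {q : ℕ} {P N : List ℕ}

theorem map_add (h : IsNormalPair q P N) (k : ℕ) :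
    IsNormalPair q (P.map (· + k)) (N.map (· + k)) where
  sortedLE_left := sortedLE_map_add_iff.2 h.sortedLE_left
  sortedLE_right := sortedLE_map_add_iff.2 h.sortedLE_right
  exists_between c hcP hcN := by
    obtain ⟨a, haP, rfl⟩ := List.mem_map.1 hcP
    have haN : a ∈ N := by simpa using hcN
    obtain ⟨b, hab, hbq, hb⟩ := h.exists_between a haP haN
    exact ⟨b + k, by lia, by lia, by simpa using hb⟩

theorem of_replicate_append {a k l : ℕ}
    (h : IsNormalPair q (List.replicate k a ++ P) (List.replicate l a ++ N))
    (hP : ∀ b ∈ P, a < b) : IsNormalPair q P N where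
  sortedLE_left := (List.pairwise_append.1 h.sortedLE_left.pairwise).2.1.sortedLE
  sortedLE_right := (List.pairwise_append.1 h.sortedLE_right.pairwise).2.1.sortedLE
  exists_between c hcP hcN := by
    obtain ⟨b, hcb, hbq, hb⟩ := h.exists_between c (by simp [hcP]) (by simp [hcN])
    have hba : b ≠ a := ((hP c hcP).trans hcb).ne'
    exact ⟨b, hcb, hbq, by simpa [List.mem_replicate, hba] using hb⟩

end IsNormalPair

namespace ThompsonRelations

variable {G : Type*} [Group G] {q n : ℕ} {x : ℕ → G} {g : G} {P N : List ℕ}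

theorem exists_remove_letter (hx : ThompsonRelations q x) {l : List ℕ} (hl : l.SortedLE) {a : ℕ}
    (ha : a ∈ l) (hgap : ∀ b, a < b → b ≤ a + q → b ∉ l) :
    ∃ l' : List ℕ, l'.SortedLE ∧ l.length = l'.length + 1 ∧ height q l' ≤ height q l ∧
      (l.map x).prod = (l'.map x).prod * x a := by
  obtain ⟨s, t, rfl, ht, hst⟩ := exists_eq_append_cons_map_add hl ha hgap
  refine ⟨s ++ t, hst, by simp [add_assoc], ?_, ?_⟩
  · exact height_append_le_height_append (by simp)
      ((height_le_height_map_add q).trans (le_max_right _ _))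
  · rw [List.map_append, List.map_append, List.prod_append, List.prod_append, List.map_cons,
      List.prod_cons, ← hx.prod_mul ht, mul_assoc]

theorem exists_shorter_fraction (hx : ThompsonRelations q x) (hP : P.SortedLE) (hN : N.SortedLE)
    (h : ¬ IsNormalPair q P N) :
    ∃ P' N' : List ℕ, P'.SortedLE ∧ N'.SortedLE ∧ P'.length + N'.length < P.length + N.length ∧
      height q P' ≤ height q P ∧ height q N' ≤ height q N ∧ fraction x P' N' = fraction x P N := by
  obtain ⟨a, haP, haN, hgap⟩ : ∃ a ∈ P, a ∈ N ∧ ∀ b, a < b → b ≤ a + q → b ∉ P ∧ b ∉ N := by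
    by_contra! hno
    refine h ⟨hP, hN, fun a haP haN ↦ ?_⟩
    obtain ⟨b, hab, hbq, hb⟩ := hno a haP haN
    exact ⟨b, hab, hbq, or_iff_not_imp_left.2 hb⟩
  obtain ⟨P', hP', lenP, heightP, prodP⟩ :=
    hx.exists_remove_letter hP haP fun b hab hbq ↦ (hgap b hab hbq).1
  obtain ⟨N', hN', lenN, heightN, prodN⟩ :=
    hx.exists_remove_letter hN haN fun b hab hbq ↦ (hgap b hab hbq).2
  refine ⟨P', N', hP', hN', by lia, heightP, heightN, ?_⟩
  rw [fraction, fraction, prodP, prodN]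
  group

theorem exists_isNormalPair_of_sortedLE (hx : ThompsonRelations q x) {P N : List ℕ}
    (hP : P.SortedLE) (hN : N.SortedLE) :
    ∃ P' N' : List ℕ, IsNormalPair q P' N' ∧ P'.length + N'.length ≤ P.length + N.length ∧
      height q P' ≤ height q P ∧ height q N' ≤ height q N ∧ fraction x P' N' = fraction x P N := by
  by_cases h : IsNormalPair q P N
  · exact ⟨P, N, h, le_rfl, le_rfl, le_rfl, rfl⟩
  · obtain ⟨P₁, N₁, hP₁, hN₁, hlen₁, heightP₁, heightN₁, hfrac₁⟩ :=
      hx.exists_shorter_fraction hP hN h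
    obtain ⟨P', N', hnorm, hlen, heightP, heightN, hfrac⟩ :=
      hx.exists_isNormalPair_of_sortedLE hP₁ hN₁
    exact ⟨P', N', hnorm, hlen.trans hlen₁.le, heightP.trans heightP₁, heightN.trans heightN₁,
      hfrac.trans hfrac₁⟩
termination_by P.length + N.length

theorem exists_isNormalPair_of_mem_wordBall (hx : ThompsonRelations q x)
    (hg : g ∈ wordBall (initialGenerators x (q + 1)) n) :
    ∃ P N : List ℕ, IsNormalPair q P N ∧ P.length + N.length ≤ n ∧
      height q P ≤ q * n ∧ height q N ≤ q * n ∧ fraction x P N = g := by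
  obtain ⟨P₁, N₁, hlen₁, hP₁, hN₁, rfl⟩ := hx.exists_fraction_of_mem_wordBall hg
  obtain ⟨P₂, sortedP, lenP, heightP, prodP⟩ := hx.exists_sortedLE P₁
  obtain ⟨N₂, sortedN, lenN, heightN, prodN⟩ := hx.exists_sortedLE N₁
  obtain ⟨P, N, hnorm, hlen, hP, hN, hfrac⟩ := hx.exists_isNormalPair_of_sortedLE sortedP sortedN
  refine ⟨P, N, hnorm, by lia, by lia, by lia, ?_⟩
  rw [hfrac, fraction, fraction, prodP, prodN]

end ThompsonRelations

end NormalPairs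

section UpperBound

variable {G : Type*} [Group G] {q : ℕ} {x : ℕ → G} {l : List ℕ}

theorem ThompsonRelations.prod_mem_wordBall (hx : ThompsonRelations q x) (hl : l.SortedLE) {k : ℕ}
    (hk : ∀ a ∈ l, a ≤ k * q + q) :
    (l.map x).prod ∈ wordBall (initialGenerators x (q + 1)) (l.length + 2 * k) := by
  have small : ∀ {s : List ℕ}, (∀ a ∈ s, a ≤ q) →
      (s.map x).prod ∈ wordBall (initialGenerators x (q + 1)) s.length := fun {s} hs ↦ by
    rw [← List.length_map (as := s) x]
    refine list_prod_mem_wordBall fun g hg ↦ ?_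
    obtain ⟨a, ha, rfl⟩ := List.mem_map.1 hg
    exact .inl ⟨a, Nat.lt_succ_of_le (hs a ha), rfl⟩
  induction k generalizing l with
  | zero => exact small (by simpa using hk)
  | succ k ih =>
    -- Conjugation by `x_0` lowers the letters above `q` by `q`.
    obtain ⟨s, t, rfl, hs, ht⟩ := exists_eq_append_of_sortedLE hl q
    obtain ⟨t, rfl⟩ := exists_map_add_eq fun b hb ↦ (ht b hb).le
    have ht0 : ∀ b ∈ t, 0 < b := fun b hb ↦ by
      simpa using ht (b + q) (List.mem_map_of_mem hb)
    have htk : ∀ b ∈ t, b ≤ k * q + q := fun b hb ↦ by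
      have := hk (b + q) (by simp [hb])
      rw [Nat.succ_mul] at this
      lia
    have ht_sorted : t.SortedLE :=
      sortedLE_map_add_iff.1 (List.pairwise_append.1 hl.pairwise).2.1.sortedLE
    have hx0 : x 0 ∈ wordBall (initialGenerators x (q + 1)) 1 :=
      mem_wordBall_one ⟨0, q.succ_pos, rfl⟩
    have hprod : ((s ++ t.map (· + q)).map x).prod =
        (s.map x).prod * ((x 0)⁻¹ * (t.map x).prod * x 0) := by
      rw [List.map_append, List.prod_append, mul_assoc (x 0)⁻¹, hx.prod_mul ht0,
        inv_mul_cancel_left]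
    rw [hprod]
    refine wordBall_mono ?_ (mul_mem_wordBall (small hs)
      (mul_mem_wordBall (mul_mem_wordBall (inv_mem_wordBall hx0) (ih ht_sorted htk)) hx0))
    simp only [List.length_append, List.length_map]
    lia

theorem ThompsonRelations.fraction_mem_wordBall (hx : ThompsonRelations q x) (hq : 0 < q)
    {P N : List ℕ} (hP : P.SortedLE) (hN : N.SortedLE) {a b : ℕ} (ha : ∀ c ∈ P, c ≤ a)
    (hb : ∀ c ∈ N, c ≤ b) :
    fraction x P N ∈ wordBall (initialGenerators x (q + 1))
      (P.length + 2 * a + (N.length + 2 * b)) := by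
  have le_bound : ∀ {c d : ℕ}, c ≤ d → c ≤ d * q + q := fun {_ d} h ↦
    h.trans ((Nat.le_mul_of_pos_right d hq).trans (Nat.le_add_right _ _))
  exact mul_mem_wordBall (hx.prod_mem_wordBall hP fun c hc ↦ le_bound (ha c hc))
    (inv_mem_wordBall (hx.prod_mem_wordBall hN fun c hc ↦ le_bound (hb c hc)))

end UpperBound

section RightSlope

variable {K : Type*} [Field K] [LinearOrder K] [IsStrictOrderedRing K] {g h : Equiv.Perm K}
  {a c d : K}

/-- The permutation `g` fixes `a` and has right derivative `c > 0` there, being affine on a right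
neighbourhood of `a`. -/
def HasRightSlope (g : Equiv.Perm K) (a c : K) : Prop :=
  0 < c ∧ ∃ ε > 0, ∀ t, 0 ≤ t → t ≤ ε → g (a + t) = a + c * t

namespace HasRightSlope

theorem one : HasRightSlope (1 : Equiv.Perm K) a 1 :=
  ⟨one_pos, 1, one_pos, by simp⟩

theorem mul (hg : HasRightSlope g a c) (hh : HasRightSlope h a d) :
    HasRightSlope (g * h) a (c * d) := by
  obtain ⟨hc, ε, hε, hg⟩ := hg
  obtain ⟨hd, δ, hδ, hh⟩ := hh
  refine ⟨mul_pos hc hd, min δ (ε / d), lt_min hδ (div_pos hε hd), fun t ht0 ht ↦ ?_⟩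
  obtain ⟨htδ, htε⟩ := le_min_iff.1 ht
  rw [le_div_iff₀' hd] at htε
  rw [Equiv.Perm.mul_apply, hh t ht0 htδ, hg _ (mul_nonneg hd.le ht0) htε, mul_assoc]

theorem inv (hg : HasRightSlope g a c) : HasRightSlope g⁻¹ a c⁻¹ := by
  obtain ⟨hc, ε, hε, hg⟩ := hg
  refine ⟨inv_pos.2 hc, c * ε, mul_pos hc hε, fun t ht0 ht ↦ ?_⟩
  rw [Equiv.Perm.inv_eq_iff_eq, hg _ (by positivity) ((inv_mul_le_iff₀ hc).2 ht),
    mul_inv_cancel_left₀ hc.ne']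

theorem unique (hc : HasRightSlope g a c) (hd : HasRightSlope g a d) : c = d := by
  obtain ⟨-, ε, hε, hc⟩ := hc
  obtain ⟨-, δ, hδ, hd⟩ := hd
  have hpos : 0 < min ε δ := lt_min hε hδ
  have heq := (hc _ hpos.le (min_le_left _ _)).symm.trans (hd _ hpos.le (min_le_right _ _))
  exact mul_right_cancel₀ hpos.ne' (add_left_cancel heq)

end HasRightSlope

end RightSlope

section PLAction

theorem fgen_of_le {p i : ℕ} {t : ℝ} (ht : t ≤ i) : fgen p i t = t :=
  if_pos ht

theorem fgen_add_of_le_one {q i : ℕ} {t : ℝ} (ht0 : 0 ≤ t) (ht1 : t ≤ 1) :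
    fgen (q + 1) i (i + t) = i + (q + 1) * t := by
  obtain rfl | ht0 := ht0.eq_or_lt
  · simp [fgen]
  · rw [fgen, if_neg (by linarith), if_pos (by linarith)]
    push_cast
    ring

theorem fgen_of_add_one_le {q i : ℕ} {t : ℝ} (ht : i + 1 ≤ t) : fgen (q + 1) i t = t + q := by
  obtain rfl | ht := ht.eq_or_lt
  · rw [fgen_add_of_le_one zero_le_one le_rfl]
    ring
  · rw [fgen, if_neg (by linarith), if_neg (by linarith)]
    push_cast
    ring

theorem strictMono_fgen (q i : ℕ) : StrictMono (fgen (q + 1) i) := by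
  intro s t hst
  simp only [fgen]
  push_cast
  split_ifs <;> nlinarith [(q.cast_nonneg : (0 : ℝ) ≤ q)]

theorem surjective_fgen (q i : ℕ) : Function.Surjective (fgen (q + 1) i) := by
  intro t
  have hq : (0 : ℝ) < q + 1 := by positivity
  obtain hti | hit := le_total t i
  · exact ⟨t, fgen_of_le hti⟩
  obtain htq | hqt := le_total (t - i) (q + 1)
  · refine ⟨i + (t - i) / (q + 1), ?_⟩
    rw [fgen_add_of_le_one (div_nonneg (sub_nonneg.2 hit) hq.le) ((div_le_one hq).2 htq),
      mul_div_cancel₀ _ hq.ne', add_sub_cancel]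
  · exact ⟨t - q, by rw [fgen_of_add_one_le (by linarith), sub_add_cancel]⟩

theorem fgen_add_add (q i : ℕ) (t : ℝ) : fgen (q + 1) (i + q) (t + q) = fgen (q + 1) i t + q := by
  simp only [fgen]
  push_cast
  split_ifs <;> linarith

theorem fgen_fgen {q i j : ℕ} (hij : i < j) (t : ℝ) :
    fgen (q + 1) i (fgen (q + 1) j t) = fgen (q + 1) (j + q) (fgen (q + 1) i t) := by
  have hij' : (i : ℝ) + 1 ≤ j := by exact_mod_cast hij
  obtain htj | hjt := le_total t j
  · have hfix : fgen (q + 1) i t ≤ (j + q : ℕ) := by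
      rw [Nat.cast_add, ← fgen_of_add_one_le hij']
      exact (strictMono_fgen q i).monotone htj
    rw [fgen_of_le htj, fgen_of_le hfix]
  · have hj : (j : ℝ) ≤ fgen (q + 1) j t := by
      simpa only [fgen_of_le le_rfl] using (strictMono_fgen q j).monotone hjt
    rw [fgen_of_add_one_le (hij'.trans hj), fgen_of_add_one_le (hij'.trans hjt)]
    exact (fgen_add_add q j t).symm

/-- The piecewise-linear homeomorphism of `ℝ` by which `x_i ∈ F(q + 1)` acts. It is the inverse of
`f_i`, because permutations are composed from right to left. -/
noncomputable def plGen (q i : ℕ) : Equiv.Perm ℝ :=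
  (Equiv.ofBijective (fgen (q + 1) i) ⟨(strictMono_fgen q i).injective, surjective_fgen q i⟩).symm

theorem thompsonRelations_plGen (q : ℕ) : ThompsonRelations q (plGen q) := by
  intro i j hij
  rw [← inv_inj, mul_inv_rev, mul_inv_rev]
  exact Equiv.ext (fgen_fgen hij)

variable {q a b : ℕ} {l P N P' N' : List ℕ}

theorem hasRightSlope_plGen_self : HasRightSlope (plGen q a) a (q + 1 : ℝ)⁻¹ := by
  refine inv_inv (plGen q a) ▸ HasRightSlope.inv ⟨by positivity, 1, one_pos, fun t ht0 ht1 ↦ ?_⟩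
  exact fgen_add_of_le_one ht0 ht1

theorem hasRightSlope_plGen_of_lt (hab : a < b) : HasRightSlope (plGen q b) a 1 := by
  have hab' : (a : ℝ) + 1 ≤ b := by exact_mod_cast hab
  refine inv_inv (plGen q b) ▸ inv_one (G := ℝ) ▸
    HasRightSlope.inv ⟨one_pos, 1, one_pos, fun t _ ht1 ↦ ?_⟩
  rw [one_mul]
  exact fgen_of_le (by linarith)

theorem hasRightSlope_prod_plGen (hl : ∀ b ∈ l, a ≤ b) :
    HasRightSlope (l.map (plGen q)).prod a ((q + 1 : ℝ)⁻¹ ^ l.count a) := by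
  induction l with
  | nil => simpa using HasRightSlope.one
  | cons b l ih =>
    obtain ⟨hab, hl⟩ := List.forall_mem_cons.1 hl
    specialize ih hl
    rw [List.map_cons, List.prod_cons]
    obtain rfl | hab := hab.eq_or_lt
    · rw [List.count_cons_self, pow_succ']
      exact hasRightSlope_plGen_self.mul ih
    · rw [List.count_cons_of_ne hab.ne', ← one_mul (_ ^ _)]
      exact (hasRightSlope_plGen_of_lt hab).mul ih

theorem hasRightSlope_fraction_plGen (hP : ∀ b ∈ P, a ≤ b) (hN : ∀ b ∈ N, a ≤ b) :
    HasRightSlope (fraction (plGen q) P N) a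
      ((q + 1 : ℝ)⁻¹ ^ P.count a / (q + 1 : ℝ)⁻¹ ^ N.count a) := by
  rw [div_eq_mul_inv]
  exact (hasRightSlope_prod_plGen hP).mul (hasRightSlope_prod_plGen hN).inv

theorem count_add_count_eq_of_fraction_plGen_eq (hq : 0 < q) (hP : ∀ b ∈ P, a ≤ b)
    (hN : ∀ b ∈ N, a ≤ b) (hP' : ∀ b ∈ P', a ≤ b) (hN' : ∀ b ∈ N', a ≤ b)
    (h : fraction (plGen q) P N = fraction (plGen q) P' N') :
    P.count a + N'.count a = P'.count a + N.count a := by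
  have hpos : (0 : ℝ) < (q + 1 : ℝ)⁻¹ := by positivity
  have hne : (q + 1 : ℝ)⁻¹ ≠ 1 := by simpa using hq.ne'
  have heq := (hasRightSlope_fraction_plGen hP hN).unique
    (h ▸ hasRightSlope_fraction_plGen hP' hN')
  rw [div_eq_div_iff (by positivity) (by positivity), ← pow_add, ← pow_add] at heq
  exact pow_right_injective₀ hpos hne heq

end PLAction

section Uniqueness

namespace IsNormalPair

variable {q : ℕ} {P N P' N' : List ℕ}

theorem eq_zero_of_gap {a j k l : ℕ}
    (h : IsNormalPair q (List.replicate (k + j) a ++ P) (List.replicate (l + j) a ++ N))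
    (hP : ∀ b ∈ P, a + j * q < b) (hN : ∀ b ∈ N, a + j * q < b) : j = 0 := by
  by_contra hj
  obtain ⟨b, hab, hbq, hb⟩ := h.exists_between a (by simp [hj]) (by simp [hj])
  have hbPN : b ∈ P ∨ b ∈ N := by simpa [List.mem_replicate, hab.ne'] using hb
  have hjb : a + j * q < b := hbPN.elim (hP b) (hN b)
  have hqj : q ≤ j * q := Nat.le_mul_of_pos_left q (Nat.pos_of_ne_zero hj)
  lia

theorem eq_of_fraction_replicate_append_eq {a j k l : ℕ}
    (h : IsNormalPair q (List.replicate (k + j) a ++ P) (List.replicate (l + j) a ++ N))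
    (h' : IsNormalPair q (List.replicate k a ++ P') (List.replicate l a ++ N'))
    (hP : ∀ b ∈ P, a < b) (hP' : ∀ b ∈ P', a < b) (hN' : ∀ b ∈ N', a < b)
    (e : fraction (plGen q) (List.replicate (k + j) a ++ P) (List.replicate (l + j) a ++ N) =
      fraction (plGen q) (List.replicate k a ++ P') (List.replicate l a ++ N'))
    (ih : IsNormalPair q P N → IsNormalPair q (P'.map (· + j * q)) (N'.map (· + j * q)) →
      fraction (plGen q) P N = fraction (plGen q) (P'.map (· + j * q)) (N'.map (· + j * q)) →
      P = P'.map (· + j * q) ∧ N = N'.map (· + j * q)) :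
    List.replicate (k + j) a ++ P = List.replicate k a ++ P' ∧
      List.replicate (l + j) a ++ N = List.replicate l a ++ N' := by
  have shifted := (h'.of_replicate_append hP').map_add (j * q)
  have hfrac := (thompsonRelations_plGen q).fraction_eq_of_fraction_replicate_append_eq hP' hN' e
  obtain ⟨rfl, rfl⟩ := ih (h.of_replicate_append hP) shifted hfrac
  obtain rfl : j = 0 := h.eq_zero_of_gap (by simpa using hP') (by simpa using hN')
  simp

theorem eq_of_fraction_plGen_eq (hq : 0 < q) (h : IsNormalPair q P N) (h' : IsNormalPair q P' N')
    (e : fraction (plGen q) P N = fraction (plGen q) P' N') : P = P' ∧ N = N' := by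
  induction hn : P.length + N.length + P'.length + N'.length using Nat.strong_induction_on
    generalizing P N P' N' with
  | _ n ih =>
  by_cases hempty : P ++ N ++ P' ++ N' = []
  · simp_all
  obtain ⟨a, ha, hmin⟩ := (P ++ N ++ P' ++ N').toFinset.exists_min_image id
    ((List.toFinset_nonempty_iff _).2 hempty)
  simp only [List.mem_toFinset, List.mem_append, id, or_imp, forall_and] at ha hmin
  clear hempty
  wlog hle : P'.count a ≤ P.count a generalizing P N P' N'
  · exact (this h' h e.symm (by lia) (by tauto) (by tauto) (le_of_not_ge hle)).imp
      Eq.symm Eq.symm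
  obtain ⟨⟨⟨hP, hN⟩, hP'⟩, hN'⟩ := hmin
  have hcount := count_add_count_eq_of_fraction_plGen_eq hq hP hN hP' hN' e
  simp only [← List.count_pos_iff] at ha
  obtain ⟨P₁, hP₁, hltP⟩ := exists_eq_replicate_count_append h.sortedLE_left hP
  obtain ⟨N₁, hN₁, -⟩ := exists_eq_replicate_count_append h.sortedLE_right hN
  obtain ⟨P₁', hP₁', hltP'⟩ := exists_eq_replicate_count_append h'.sortedLE_left hP'
  obtain ⟨N₁', hN₁', hltN'⟩ := exists_eq_replicate_count_append h'.sortedLE_right hN'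
  obtain ⟨j, hj⟩ := Nat.exists_eq_add_of_le hle
  rw [hj] at hP₁ hcount ha
  rw [show N.count a = N'.count a + j by lia] at hN₁ ha
  generalize P'.count a = k at *
  generalize N'.count a = l at *
  subst hP₁ hN₁ hP₁' hN₁'
  refine eq_of_fraction_replicate_append_eq h h' hltP hltP' hltN' e fun h₁ h₁' e₁ ↦ ?_
  refine ih _ ?_ h₁ h₁' e₁ rfl
  simp only [List.length_append, List.length_replicate, List.length_map] at hn ⊢
  lia

end IsNormalPair

end Uniqueness
section Presentation

variable {q n : ℕ} {P N : List ℕ}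

theorem thompsonRelations_xg (q : ℕ) : ThompsonRelations q (xg (q + 1)) := by
  intro i j hij
  have rel : (xg (q + 1) i)⁻¹ * xg (q + 1) j * xg (q + 1) i * (xg (q + 1) (j + q))⁻¹ = 1 :=
    PresentedGroup.one_of_mem ⟨i, j, hij, rfl⟩
  rwa [mul_inv_eq_one, mul_assoc, inv_mul_eq_iff_eq_mul] at rel

/-- The action of `F(q + 1)` on `ℝ` by piecewise-linear homeomorphisms. -/
noncomputable def plHom (q : ℕ) : FP (q + 1) →* Equiv.Perm ℝ :=
  PresentedGroup.toGroup (rels := thompsonRels (q + 1)) (f := plGen q) <| by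
    rintro _ ⟨i, j, hij, rfl⟩
    simp only [map_mul, map_inv, FreeGroup.lift_apply_of]
    rw [mul_inv_eq_one, mul_assoc, inv_mul_eq_iff_eq_mul]
    exact thompsonRelations_plGen q hij

theorem plHom_comp_xg (q : ℕ) : plHom q ∘ xg (q + 1) = plGen q :=
  funext fun _ ↦ PresentedGroup.toGroup.of _

theorem IsNormalPair.bounds_of_fraction_mem_wordBall (hq : 0 < q) (h : IsNormalPair q P N)
    (hn : fraction (xg (q + 1)) P N ∈ wordBall (initialGenerators (xg (q + 1)) (q + 1)) n) :
    P.length + N.length ≤ n ∧ (∀ a ∈ P, a ≤ q * n) ∧ ∀ a ∈ N, a ≤ q * n := by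
  obtain ⟨P', N', h', hlen, heightP, heightN, hfrac⟩ :=
    (thompsonRelations_xg q).exists_isNormalPair_of_mem_wordBall hn
  have hpl := congrArg (plHom q) hfrac
  rw [map_fraction, map_fraction, plHom_comp_xg] at hpl
  obtain ⟨rfl, rfl⟩ := h'.eq_of_fraction_plGen_eq hq h hpl
  exact ⟨hlen, fun a ha ↦ (le_height_of_mem ha).trans heightP,
    fun a ha ↦ (le_height_of_mem ha).trans heightN⟩

end Presentation

section Syllables

/-- The sorted word `i 0, …, i 0, i 1, …, i 1, …` in which `i k` is repeated `r k` times, i.e. the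
list of letters of `x_{i₁}^{r₁} ⋯ x_{iₙ}^{rₙ}`. -/
def letters {n : ℕ} (i r : Fin n → ℕ) : List ℕ :=
  (List.ofFn fun k ↦ List.replicate (r k) (i k)).flatten

/-- The last of the indices `i`, with value `0` for the empty family. -/
def lastIndex {n : ℕ} (i : Fin n → ℕ) : ℕ :=
  if hn : 0 < n then i ⟨n - 1, Nat.sub_lt hn Nat.one_pos⟩ else 0

variable {n : ℕ} {i r : Fin n → ℕ} {a : ℕ}

theorem mem_letters (hr : ∀ k, 1 ≤ r k) : a ∈ letters i r ↔ ∃ k, i k = a := by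
  have hr' : ∀ k, r k ≠ 0 := fun k ↦ Nat.one_le_iff_ne_zero.1 (hr k)
  simp [letters, List.mem_replicate, hr', eq_comm]

theorem length_letters : (letters i r).length = ∑ k, r k := by
  simp [letters, List.length_flatten, List.map_ofFn, Function.comp_def, List.sum_ofFn]

theorem prod_letters {M : Type*} [Monoid M] (x : ℕ → M) :
    ((letters i r).map x).prod = (List.ofFn fun k ↦ x (i k) ^ r k).prod := by
  simp [letters, List.map_flatten, List.prod_flatten, List.map_ofFn, Function.comp_def]

theorem sortedLE_letters (hi : StrictMono i) : (letters i r).SortedLE := by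
  refine (List.pairwise_flatten.2 ⟨?_, ?_⟩).sortedLE
  · simp [List.pairwise_replicate]
  · refine List.pairwise_ofFn.2 fun k l hkl b hb c hc ↦ ?_
    rw [List.eq_of_mem_replicate hb, List.eq_of_mem_replicate hc]
    exact (hi hkl).le

theorem le_lastIndex (hi : StrictMono i) (k : Fin n) : i k ≤ lastIndex i := by
  rw [lastIndex, dif_pos k.pos]
  exact hi.monotone (Nat.le_sub_one_of_lt k.isLt)

theorem lastIndex_le {b : ℕ} (hi : ∀ k, i k ≤ b) : lastIndex i ≤ b := by
  rw [lastIndex]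
  split_ifs
  · exact hi _
  · exact b.zero_le

end Syllables

end ThompsonGroup

namespace NFData

open ThompsonGroup

theorem D_eq {p : ℕ} (d : NFData p) :
    d.D = (∑ k, d.r k) + (∑ l, d.s l) + lastIndex d.i + lastIndex d.j :=
  rfl

namespace IsNormalFormOf

variable {q n : ℕ} {d : NFData (q + 1)} {x : FP (q + 1)}

theorem isNormalPair (hd : d.IsNormalFormOf x) :
    IsNormalPair q (letters d.i d.r) (letters d.j d.s) := by
  obtain ⟨hi, hj, hr, hs, -, hbetween, -⟩ := hd
  refine ⟨sortedLE_letters hi, sortedLE_letters hj, fun a haP haN ↦ ?_⟩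
  obtain ⟨b, hab, hbq, hb⟩ := hbetween a ((mem_letters hr).1 haP) ((mem_letters hs).1 haN)
  exact ⟨b, hab, hbq, hb.imp (mem_letters hr).2 (mem_letters hs).2⟩

theorem eq_fraction (hd : d.IsNormalFormOf x) :
    x = fraction (xg (q + 1)) (letters d.i d.r) (letters d.j d.s) := by
  obtain ⟨-, -, -, -, -, -, rfl⟩ := hd
  rw [fraction, prod_letters, prod_letters, elem]

theorem mem_wordBall (hd : d.IsNormalFormOf x) (hq : 0 < q) :
    x ∈ wordBall (initialGenerators (xg (q + 1)) (q + 1)) (3 * d.D) := by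
  obtain ⟨hi, hj, hr, hs, -⟩ := id hd
  have hP : ∀ c ∈ letters d.i d.r, c ≤ lastIndex d.i := fun c hc ↦ by
    obtain ⟨k, rfl⟩ := (mem_letters hr).1 hc
    exact le_lastIndex hi k
  have hN : ∀ c ∈ letters d.j d.s, c ≤ lastIndex d.j := fun c hc ↦ by
    obtain ⟨k, rfl⟩ := (mem_letters hs).1 hc
    exact le_lastIndex hj k
  rw [hd.eq_fraction]
  refine wordBall_mono ?_ ((thompsonRelations_xg q).fraction_mem_wordBall hq
    (sortedLE_letters hi) (sortedLE_letters hj) hP hN)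
  rw [length_letters, length_letters, D_eq]
  lia

theorem D_le_of_mem_wordBall (hd : d.IsNormalFormOf x) (hq : 0 < q)
    (hx : x ∈ wordBall (initialGenerators (xg (q + 1)) (q + 1)) n) : d.D ≤ 3 * (q * n) := by
  obtain ⟨-, -, hr, hs, -⟩ := id hd
  rw [hd.eq_fraction] at hx
  obtain ⟨hlen, hP, hN⟩ := hd.isNormalPair.bounds_of_fraction_mem_wordBall hq hx
  have hi : lastIndex d.i ≤ q * n := lastIndex_le fun k ↦ hP _ ((mem_letters hr).2 ⟨k, rfl⟩)
  have hj : lastIndex d.j ≤ q * n := lastIndex_le fun l ↦ hN _ ((mem_letters hs).2 ⟨l, rfl⟩)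
  have hn : n ≤ q * n := Nat.le_mul_of_pos_left n hq
  rw [length_letters, length_letters] at hlen
  rw [D_eq]
  lia

end IsNormalFormOf

end NFData

/-- Theorem 1. If `x ∈ F(p)` has normal form
`x_{i₁}^{r₁} ⋯ x_{iₙ}^{rₙ} · x_{jₘ}^{-sₘ} ⋯ x_{j₁}^{-s₁}` and
`D(x) = r₁ + ⋯ + rₙ + s₁ + ⋯ + sₘ + iₙ + jₘ`, then
`D(x)/(3(p-1)) ≤ |x|_p ≤ 3·D(x)`. -/
theorem statement0 (p : ℕ) (hp : 2 ≤ p) (x : FP p) (d : NFData p)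
    (hd : d.IsNormalFormOf x) :
    (d.D : ℝ) / (3 * ((p : ℝ) - 1)) ≤ (wlen p x : ℝ) ∧
      (wlen p x : ℝ) ≤ 3 * (d.D : ℝ) := by
  obtain ⟨q, rfl⟩ : ∃ q, p = q + 1 := ⟨p - 1, by lia⟩
  have hq : 0 < q := by lia
  have hx := hd.mem_wordBall hq
  have upper : wlen (q + 1) x ≤ 3 * d.D := ThompsonGroup.wordLength_le_of_mem_wordBall hx
  have lower : d.D ≤ 3 * (q * wlen (q + 1) x) :=
    hd.D_le_of_mem_wordBall hq (ThompsonGroup.mem_wordBall_wordLength hx)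
  have hq' : (0 : ℝ) < 3 * q := by positivity
  refine ⟨?_, by exact_mod_cast upper⟩
  rw [Nat.cast_add_one, add_sub_cancel_right, div_le_iff₀' hq', mul_assoc]
  exact_mod_cast lower
end

section
/- Let p ≥ 2 and k ≥ 1 be integers, and realize the groups F(p) and F(p^k) as groups of piecewise-linear homeomorphisms of [0,1]. Then F(p^k) is a subgroup of F(p), and the inclusion is a quasi-isometric embedding: for every finite generating set S of F(p^k) and every finite generating set T of F(p) there is a constant C ≥ 1 such that for all x ∈ F(p^k), (1/C)·ℓ_S(x) ≤ ℓ_T(x) ≤ C·ℓ_S(x), where ℓ_S and ℓ_T denote word length with respect to S and T respectively. -/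
open scoped BigOperators

/-!
A node `(n, d)` stands for the interval `[n / q ^ d, (n + 1) / q ^ d]`. The carets of `f` are the
nodes that `f` does not map affinely onto another node; they are the interior nodes of the domain
tree in the reduced tree pair diagram of `f`. On `F(q)` their number is finite and subadditive, so
it is at most a constant times the word length. Conversely, multiplying by a suitable element of a
fixed finite set of caret moves shifts a caret of `f` towards the left spine of the tree without
enlarging the tree pair; the subtree at the first child of the root is emptied beforehand, so that
no caret can get stuck below it. An element of `F(q)` all of whose carets, and all of whose
inverse's carets, lie on the left spine is the identity. Hence the word length is at most a constant
times the number of carets of `f` and `f⁻¹`.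

An element of `F(p ^ k)` has slopes in `p ^ (k ℤ)`, so if it maps the interval `(n, k * d)` of the
`p`-ary tree onto an interval of that tree, the latter has depth divisible by `k`. Carets of the
`p ^ k`-ary tree therefore inject into those of the `p`-ary one, and comparing both counts with word
length gives the lower bound for the distortion; the upper bound is immediate.
-/

section PAdicRational

variable {q : ℕ} {x y : ℝ}

theorem IsPAdicRational.of_pow {p k : ℕ} (hx : IsPAdicRational (p ^ k) x) :
    IsPAdicRational p x := by
  obtain ⟨a, n, rfl⟩ := hx
  exact ⟨a, k * n, by rw [Nat.cast_pow, pow_mul]⟩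

theorem IsPAdicRational.exists_eq_div_pow (hq : 0 < q) (hx : IsPAdicRational q x) :
    ∃ N₀ : ℕ, ∀ N ≥ N₀, ∃ z : ℤ, x = z / (q : ℝ) ^ N := by
  obtain ⟨a, n, rfl⟩ := hx
  refine ⟨n, fun N hN => ⟨a * (q : ℤ) ^ (N - n), ?_⟩⟩
  rw [div_eq_div_iff (by positivity) (by positivity)]
  push_cast
  rw [mul_assoc, ← pow_add, Nat.sub_add_cancel hN]

theorem isPAdicRational_zero (q : ℕ) : IsPAdicRational q 0 := ⟨0, 0, by simp⟩

theorem isPAdicRational_natCast_div_pow (q m d : ℕ) : IsPAdicRational q ((m : ℝ) / (q : ℝ) ^ d) :=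
  ⟨m, d, by simp⟩

theorem IsPAdicRational.add (hq : 0 < q) (hx : IsPAdicRational q x) (hy : IsPAdicRational q y) :
    IsPAdicRational q (x + y) := by
  obtain ⟨M, hM⟩ := hx.exists_eq_div_pow hq
  obtain ⟨N, hN⟩ := hy.exists_eq_div_pow hq
  obtain ⟨a, ha⟩ := hM (max M N) (le_max_left M N)
  obtain ⟨b, hb⟩ := hN (max M N) (le_max_right M N)
  exact ⟨a + b, max M N, by rw [ha, hb]; push_cast; ring⟩

theorem isPAdicRational_zpow (q : ℕ) (k : ℤ) : IsPAdicRational q ((q : ℝ) ^ k) := by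
  obtain ⟨n, rfl | rfl⟩ := k.eq_nat_or_neg
  · exact ⟨(q : ℤ) ^ n, 0, by simp⟩
  · exact ⟨1, n, by simp⟩

theorem exists_common_denominator (hq : 0 < q) (B : Finset ℝ) (hB : ∀ b ∈ B, IsPAdicRational q b) :
    ∃ N₀ : ℕ, ∀ N ≥ N₀, ∀ b ∈ B, ∃ z : ℤ, b = z / (q : ℝ) ^ N := by
  choose! N hN using fun b hb => (hB b hb).exists_eq_div_pow hq
  exact ⟨B.sup N, fun M hM b hb => hN b hb M ((Finset.le_sup hb).trans hM)⟩

end PAdicRational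

namespace Thompson

open Filter Topology Set

section WordLength

variable {G : Type*} [Group G] {S : Set G} {m n : ℕ} {x y z : G}

/-- `x` and `y` are at distance at most `n` in the Cayley graph of `G` with respect to `S`. The set
`S` need not generate `G`, so this is not expressed through `wordLength`, which is `0` on elements
that are not products of generators. -/
def Near (S : Set G) (n : ℕ) (x y : G) : Prop :=
  ∃ w : List G, (∀ g ∈ w, g ∈ S ∨ g⁻¹ ∈ S) ∧ w.length ≤ n ∧ x * w.prod = y

theorem Near.refl (S : Set G) (x : G) : Near S 0 x x := ⟨[], by simp, by simp, by simp⟩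

theorem Near.mul_right {s : G} (hs : s ∈ S ∨ s⁻¹ ∈ S) (x : G) : Near S 1 x (x * s) :=
  ⟨[s], by simpa using hs, by simp, by simp⟩

theorem Near.mul_left (h : Near S n x y) (z : G) : Near S n (z * x) (z * y) := by
  obtain ⟨w, hw, hn, rfl⟩ := h
  exact ⟨w, hw, hn, mul_assoc z x _⟩

theorem Near.mono (h : Near S m x y) (hmn : m ≤ n) : Near S n x y := by
  obtain ⟨w, hw, hm, hxy⟩ := h
  exact ⟨w, hw, hm.trans hmn, hxy⟩

theorem Near.trans (h : Near S m x y) (h' : Near S n y z) : Near S (m + n) x z := by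
  obtain ⟨v, hv, hm, rfl⟩ := h
  obtain ⟨w, hw, hn, rfl⟩ := h'
  refine ⟨v ++ w, fun g hg => (List.mem_append.1 hg).elim (hv g) (hw g), ?_, ?_⟩
  · rw [List.length_append]
    exact add_le_add hm hn
  · rw [List.prod_append, mul_assoc]

theorem Near.symm (h : Near S n x y) : Near S n y x := by
  obtain ⟨w, hw, hn, rfl⟩ := h
  refine ⟨(w.map (·⁻¹)).reverse, fun g hg => ?_, by simpa using hn, ?_⟩
  · obtain ⟨s, hs, rfl⟩ := List.mem_map.1 (List.mem_reverse.1 hg)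
    rw [inv_inv]
    exact (hw s hs).symm
  · rw [← List.prod_inv_reverse, mul_inv_cancel_right]

theorem near_one_of_mem_closure (hx : x ∈ Subgroup.closure S) : Near S (wordLength S x) 1 x := by
  obtain ⟨w, hw, hprod⟩ : ∃ w : List G, (∀ g ∈ w, g ∈ S ∨ g⁻¹ ∈ S) ∧ w.prod = x := by
    rw [← Subgroup.mem_toSubmonoid, Subgroup.closure_toSubmonoid] at hx
    obtain ⟨w, hw, hprod⟩ := Submonoid.exists_list_of_mem_closure hx
    exact ⟨w, hw, hprod⟩
  have hne : {n | ∃ w : List G, w.length = n ∧ (∀ g ∈ w, g ∈ S ∨ g⁻¹ ∈ S) ∧ w.prod = x}.Nonempty :=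
    ⟨w.length, w, rfl, hw, hprod⟩
  obtain ⟨v, hlength, hv, hprod⟩ := Nat.sInf_mem hne
  exact ⟨v, hv, hlength.le, by rw [hprod, one_mul]⟩

theorem Near.wordLength_le (h : Near S n 1 x) : wordLength S x ≤ n := by
  obtain ⟨w, hw, hn, hprod⟩ := h
  have hle : wordLength S x ≤ w.length :=
    Nat.sInf_le ⟨w, rfl, hw, (one_mul w.prod).symm.trans hprod⟩
  exact hle.trans hn

theorem wordLength_one (S : Set G) : wordLength S 1 = 0 :=
  Nat.le_zero.1 (Near.refl S 1).wordLength_le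

theorem wordLength_mul_le (hx : x ∈ Subgroup.closure S) (hy : y ∈ Subgroup.closure S) :
    wordLength S (x * y) ≤ wordLength S x + wordLength S y := by
  have hxy : Near S (wordLength S y) x (x * y) := by
    simpa using (near_one_of_mem_closure hy).mul_left x
  exact ((near_one_of_mem_closure hx).trans hxy).wordLength_le

/-- A function that vanishes at `1` and is subadditive for the product on a subgroup. -/
structure IsSubadditiveOn (H : Subgroup G) (L : G → ℕ) : Prop where
  map_one : L 1 = 0
  map_mul_le : ∀ x ∈ H, ∀ y ∈ H, L (x * y) ≤ L x + L y

theorem isSubadditiveOn_wordLength (S : Set G) :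
    IsSubadditiveOn (Subgroup.closure S) (wordLength S) :=
  ⟨wordLength_one S, fun _ hx _ hy => wordLength_mul_le hx hy⟩

theorem IsSubadditiveOn.exists_le_mul_of_near {H : Subgroup G} {L : G → ℕ}
    (hL : IsSubadditiveOn H L) (hfin : S.Finite) (hS : S ⊆ H) :
    ∃ c, ∀ n x, Near S n 1 x → L x ≤ c * n := by
  obtain ⟨c, hc⟩ : ∃ c, ∀ s, s ∈ S ∨ s⁻¹ ∈ S → L s ≤ c := by
    obtain ⟨c, hc⟩ := ((hfin.union hfin.inv).image L).bddAbove
    exact ⟨c, fun s hs => hc ⟨s, hs, rfl⟩⟩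
  have hSH : ∀ s, s ∈ S ∨ s⁻¹ ∈ S → s ∈ H := by
    rintro s (hs | hs)
    · exact hS hs
    · exact inv_mem_iff.1 (hS hs)
  have hword : ∀ w : List G, (∀ g ∈ w, g ∈ S ∨ g⁻¹ ∈ S) → L w.prod ≤ c * w.length := by
    intro w hw
    induction w with
    | nil => simp [hL.map_one]
    | cons s w ih =>
      rw [List.forall_mem_cons] at hw
      have hprod : w.prod ∈ H := H.list_prod_mem fun g hg => hSH g (hw.2 g hg)
      calc L (s :: w).prod ≤ L s + L w.prod := by
            rw [List.prod_cons]; exact hL.map_mul_le s (hSH s hw.1) _ hprod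
        _ ≤ c + c * w.length := add_le_add (hc s hw.1) (ih hw.2)
        _ = c * (s :: w).length := by rw [List.length_cons]; ring
  refine ⟨c, ?_⟩
  rintro n x ⟨w, hw, hn, rfl⟩
  rw [one_mul]
  exact (hword w hw).trans (Nat.mul_le_mul_left c hn)

theorem IsSubadditiveOn.exists_le_mul_wordLength {H : Subgroup G} {L : G → ℕ}
    (hL : IsSubadditiveOn H L) (hfin : S.Finite) (hS : S ⊆ H) :
    ∃ c, ∀ x ∈ Subgroup.closure S, L x ≤ c * wordLength S x := by
  obtain ⟨c, hc⟩ := hL.exists_le_mul_of_near hfin hS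
  exact ⟨c, fun x hx => hc _ x (near_one_of_mem_closure hx)⟩

theorem exists_near_of_descent {P Q : G → Prop} (μ : G → ℕ)
    (step : ∀ x, P x → ¬Q x → ∃ s, (s ∈ S ∨ s⁻¹ ∈ S) ∧ P (x * s) ∧ μ (x * s) < μ x)
    {x : G} (hx : P x) : ∃ y, P y ∧ Q y ∧ Near S (μ x) x y := by
  induction hn : μ x using Nat.strong_induction_on generalizing x with
  | _ n ih =>
    by_cases hQ : Q x
    · exact ⟨x, hx, hQ, (Near.refl S x).mono (Nat.zero_le n)⟩
    · obtain ⟨s, hs, hP, hlt⟩ := step x hx hQ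
      obtain ⟨y, hy, hQy, hnear⟩ := ih _ (hn ▸ hlt) hP rfl
      exact ⟨y, hy, hQy, ((Near.mul_right hs x).trans hnear).mono (by omega)⟩

end WordLength

section PiecewiseLinear

variable {q : ℕ} {f g : Equiv.Perm ℝ} {t : ℝ}

/-- Near `t`, the function `f` is affine with slope a power of `q`. -/
def IsAffineNear (q : ℕ) (f : ℝ → ℝ) (t : ℝ) : Prop :=
  ∃ (k : ℤ) (c : ℝ), ∀ᶠ s in 𝓝 t, f s = (q : ℝ) ^ k * s + c

theorem IsAffineNear.analyticAt {f : ℝ → ℝ} (hf : IsAffineNear q f t) : AnalyticAt ℝ f t := by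
  obtain ⟨k, c, h⟩ := hf
  have haffine : AnalyticAt ℝ (fun s : ℝ => (q : ℝ) ^ k * s + c) t := by fun_prop
  exact haffine.congr (h.mono fun s hs => hs.symm)

theorem IsAffineNear.comp {f g : ℝ → ℝ} (hq : 0 < q) (hf : IsAffineNear q f (g t))
    (hg : IsAffineNear q g t) : IsAffineNear q (f ∘ g) t := by
  have hcont : ContinuousAt g t := hg.analyticAt.continuousAt
  obtain ⟨k, c, hf⟩ := hf
  obtain ⟨l, d, hg⟩ := hg
  refine ⟨k + l, (q : ℝ) ^ k * d + c, ?_⟩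
  filter_upwards [hg, hcont.eventually hf] with s hs hfs
  rw [Function.comp_apply, hfs, hs, zpow_add₀ (by positivity)]
  ring

theorem IsAffineNear.inv (hq : 0 < q) (hf : IsAffineNear q f t) : IsAffineNear q ⇑f⁻¹ (f t) := by
  obtain ⟨k, c, hf⟩ := hf
  have hpow : (q : ℝ) ^ k ≠ 0 := by positivity
  have htendsto : Tendsto (fun y => ((q : ℝ) ^ k)⁻¹ * (y - c)) (𝓝 (f t)) (𝓝 t) := by
    have hcont : ContinuousAt (fun y => ((q : ℝ) ^ k)⁻¹ * (y - c)) (f t) := by fun_prop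
    rw [ContinuousAt, hf.self_of_nhds, add_sub_cancel_right, inv_mul_cancel_left₀ hpow] at hcont
    rwa [hf.self_of_nhds]
  refine ⟨-k, -(((q : ℝ) ^ k)⁻¹ * c), ?_⟩
  filter_upwards [htendsto.eventually hf] with y hy
  rw [mul_inv_cancel_left₀ hpow, sub_add_cancel] at hy
  rw [Equiv.Perm.inv_eq_iff_eq, zpow_neg, ← sub_eq_add_neg, ← mul_sub, hy]

theorem exists_affine_on_Icc {f : ℝ → ℝ} (hf : Continuous f) {a b : ℝ} (hab : a < b)
    (haffine : ∀ t ∈ Ioo a b, IsAffineNear q f t) :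
    ∃ (k : ℤ) (c : ℝ), ∀ t ∈ Icc a b, f t = (q : ℝ) ^ k * t + c := by
  obtain ⟨m, hm⟩ := nonempty_Ioo.2 hab
  obtain ⟨k, c, hnear⟩ := haffine m hm
  have hg : AnalyticOnNhd ℝ (fun t : ℝ => (q : ℝ) ^ k * t + c) (Ioo a b) :=
    fun t _ => by fun_prop
  have heqOn : EqOn f (fun t : ℝ => (q : ℝ) ^ k * t + c) (Ioo a b) :=
    AnalyticOnNhd.eqOn_of_preconnected_of_eventuallyEq (fun t ht => (haffine t ht).analyticAt) hg
      isPreconnected_Ioo hm hnear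
  have hclosure := heqOn.closure hf (by fun_prop)
  rw [closure_Ioo hab.ne] at hclosure
  exact ⟨k, c, hclosure⟩

/-- Piecewise-linear homeomorphisms of the half line `[0, ∞)` (extended by the identity to `ℝ`) with
finitely many breakpoints, all in `ℤ[1/q]`, and slopes powers of `q`. It contains `PLSet q` as well
as the maps `bend`, into which the generators of `PLSet q` will be factored. -/
def halfLinePL (q : ℕ) : Set (Equiv.Perm ℝ) :=
  {f | Monotone f ∧ (∀ t ≤ 0, f t = t) ∧ ∃ B : Finset ℝ, (∀ b ∈ B, IsPAdicRational q b) ∧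
    ∀ t ∉ B, IsAffineNear q f t}

theorem mem_PLSet_iff : f ∈ PLSet q ↔ f ∈ halfLinePL q ∧ ∀ t, 1 ≤ t → f t = t := by
  have hnear : ∀ t, (∃ ε > (0 : ℝ), ∃ (k : ℤ) (c : ℝ), ∀ s : ℝ, |s - t| < ε →
      f s = (q : ℝ) ^ k * s + c) ↔ IsAffineNear q f t := by
    simp only [IsAffineNear, Metric.eventually_nhds_iff, Real.dist_eq]
    exact fun t => ⟨fun ⟨ε, hε, k, c, h⟩ => ⟨k, c, ε, hε, h⟩,
      fun ⟨k, c, ε, hε, h⟩ => ⟨ε, hε, k, c, h⟩⟩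
  simp only [PLSet, halfLinePL, mem_ofPred_eq, hnear, Finset.mem_coe]
  tauto

theorem continuous_of_mem_halfLinePL (hf : f ∈ halfLinePL q) : Continuous f :=
  hf.1.continuous_of_surjective f.surjective

theorem exists_affine_on_grid (hq : 0 < q) (hf : f ∈ halfLinePL q) :
    ∃ N₀ : ℕ, ∀ N ≥ N₀, ∀ n : ℕ, ∃ (k : ℤ) (c : ℝ),
      ∀ t ∈ Icc ((n : ℝ) / (q : ℝ) ^ N) ((n + 1) / (q : ℝ) ^ N), f t = (q : ℝ) ^ k * t + c := by
  obtain ⟨B, hB, haffine⟩ := hf.2.2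
  obtain ⟨N₀, hN₀⟩ := exists_common_denominator hq B hB
  refine ⟨N₀, fun N hN n => ?_⟩
  have hpow : (0 : ℝ) < (q : ℝ) ^ N := by positivity
  refine exists_affine_on_Icc (continuous_of_mem_halfLinePL hf) (by gcongr; linarith)
    fun t ht => haffine t fun htB => ?_
  obtain ⟨z, rfl⟩ := hN₀ N hN t htB
  rw [mem_Ioo, div_lt_div_iff_of_pos_right hpow, div_lt_div_iff_of_pos_right hpow] at ht
  norm_cast at ht
  omega

theorem isPAdicRational_apply (hq : 0 < q) (hf : f ∈ halfLinePL q) (ht : IsPAdicRational q t) :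
    IsPAdicRational q (f t) := by
  obtain hneg | hpos := le_total t 0
  · rwa [hf.2.1 t hneg]
  obtain ⟨N₀, hgrid⟩ := exists_affine_on_grid hq hf
  obtain ⟨M, hM⟩ := ht.exists_eq_div_pow hq
  set N := max M N₀
  have hpow : (0 : ℝ) < (q : ℝ) ^ N := by positivity
  have hnode : ∀ n : ℕ, IsPAdicRational q (f (n / (q : ℝ) ^ N)) := by
    intro n
    induction n with
    | zero => simpa [hf.2.1 0 le_rfl] using isPAdicRational_zero q
    | succ n ih =>
      obtain ⟨k, c, haffine⟩ := hgrid N (le_max_right M N₀) n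
      have hle : (n : ℝ) / (q : ℝ) ^ N ≤ (n + 1) / (q : ℝ) ^ N := by gcongr; linarith
      have hstep : f ((n + 1 : ℕ) / (q : ℝ) ^ N) = f (n / (q : ℝ) ^ N) + (q : ℝ) ^ (k - N) := by
        push_cast
        rw [haffine _ ⟨le_rfl, hle⟩, haffine _ ⟨hle, le_rfl⟩, zpow_sub₀ (by positivity),
          zpow_natCast]
        ring
      exact hstep ▸ ih.add hq (isPAdicRational_zpow q _)
  obtain ⟨z, rfl⟩ := hM N (le_max_left M N₀)
  have hz : 0 ≤ z := by exact_mod_cast nonneg_of_mul_nonneg_left hpos (inv_pos.2 hpow)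
  lift z to ℕ using hz
  exact hnode z

theorem inv_mem_halfLinePL (hq : 0 < q) (hf : f ∈ halfLinePL q) : f⁻¹ ∈ halfLinePL q := by
  classical
  obtain ⟨hf_mono, hf_neg, B, hB, hBf⟩ := id hf
  refine ⟨fun x y hxy => ?_, fun t ht => ?_, B.image f, fun b hb => ?_, fun t ht => ?_⟩
  · refine (hf_mono.strictMono_of_injective f.injective).le_iff_le.1 ?_
    simpa using hxy
  · rw [Equiv.Perm.inv_eq_iff_eq, hf_neg t ht]
  · obtain ⟨a, ha, rfl⟩ := Finset.mem_image.1 hb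
    exact isPAdicRational_apply hq hf (hB a ha)
  · obtain ⟨s, rfl⟩ := f.surjective t
    exact (hBf s fun hs => ht (Finset.mem_image_of_mem f hs)).inv hq

theorem mul_mem_halfLinePL (hq : 0 < q) (hf : f ∈ halfLinePL q) (hg : g ∈ halfLinePL q) :
    f * g ∈ halfLinePL q := by
  classical
  obtain ⟨B, hB, hBf⟩ := hf.2.2
  obtain ⟨C, hC, hCg⟩ := hg.2.2
  refine ⟨hf.1.comp hg.1, fun t ht => ?_, C ∪ B.image ⇑g⁻¹, fun b hb => ?_, fun t ht => ?_⟩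
  · rw [Equiv.Perm.mul_apply, hg.2.1 t ht, hf.2.1 t ht]
  · rw [Finset.mem_union, Finset.mem_image] at hb
    obtain hb | ⟨b, hb, rfl⟩ := hb
    · exact hC b hb
    · exact isPAdicRational_apply hq (inv_mem_halfLinePL hq hg) (hB b hb)
  · rw [Finset.mem_union, Finset.mem_image, not_or] at ht
    have hgt : g t ∉ B := fun hgt => ht.2 ⟨g t, hgt, g.symm_apply_apply t⟩
    rw [Equiv.Perm.coe_mul]
    exact (hBf (g t) hgt).comp hq (hCg t ht.1)

theorem mul_mem_PLSet (hq : 0 < q) (hf : f ∈ PLSet q) (hg : g ∈ PLSet q) : f * g ∈ PLSet q := by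
  rw [mem_PLSet_iff] at *
  refine ⟨mul_mem_halfLinePL hq hf.1 hg.1, fun t ht => ?_⟩
  rw [Equiv.Perm.mul_apply, hg.2 t ht, hf.2 t ht]

theorem inv_mem_PLSet (hq : 0 < q) (hf : f ∈ PLSet q) : f⁻¹ ∈ PLSet q := by
  rw [mem_PLSet_iff] at *
  refine ⟨inv_mem_halfLinePL hq hf.1, fun t ht => ?_⟩
  rw [Equiv.Perm.inv_eq_iff_eq, hf.2 t ht]

theorem IsAffineNear.of_pow {p k : ℕ} {f : ℝ → ℝ} (hf : IsAffineNear (p ^ k) f t) :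
    IsAffineNear p f t := by
  obtain ⟨l, c, h⟩ := hf
  refine ⟨k * l, c, h.mono fun s hs => ?_⟩
  rw [hs, Nat.cast_pow, zpow_mul, zpow_natCast]

theorem PLSet_pow_subset (p k : ℕ) : PLSet (p ^ k) ⊆ PLSet p := by
  intro f hf
  obtain ⟨⟨hmono, hneg, B, hB, haffine⟩, hone⟩ := mem_PLSet_iff.1 hf
  exact mem_PLSet_iff.2
    ⟨⟨hmono, hneg, B, fun b hb => (hB b hb).of_pow, fun t ht => (haffine t ht).of_pow⟩, hone⟩

end PiecewiseLinear

section Node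

variable {q : ℕ} {f g : Equiv.Perm ℝ} {I J K : ℕ × ℕ}

/-- The node `(n, d)` of the `q`-ary tree stands for the interval `[n / q ^ d, (n + 1) / q ^ d]`;
this is its affine parametrization by `[0, 1]`. -/
noncomputable def nodePoint (q : ℕ) (I : ℕ × ℕ) (t : ℝ) : ℝ := (I.1 + t) / (q : ℝ) ^ I.2

/-- The interval of the node is contained in `[0, 1]`. -/
def IsNode (q : ℕ) (I : ℕ × ℕ) : Prop := I.1 < q ^ I.2

/-- The `i`-th child of a node in the `q`-ary tree, for `i < q`. -/
def child (q : ℕ) (I : ℕ × ℕ) (i : ℕ) : ℕ × ℕ := (I.1 * q + i, I.2 + 1)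

/-- The permutation `f` maps the interval of `I` onto the interval of `J` by an increasing affine
map. -/
structure MapsNode (q : ℕ) (f : Equiv.Perm ℝ) (I J : ℕ × ℕ) : Prop where
  source : IsNode q I
  target : IsNode q J
  apply : ∀ t ∈ Icc (0 : ℝ) 1, f (nodePoint q I t) = nodePoint q J t

/-- The carets of `f`: the interior nodes of the domain tree in the reduced tree pair diagram of `f`
or, in other words, the nodes that `f` does not map affinely onto a node. -/
def carets (q : ℕ) (f : Equiv.Perm ℝ) : Set (ℕ × ℕ) := {I | IsNode q I ∧ ∀ J, ¬MapsNode q f I J}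

theorem nodePoint_descendant (hq : 0 < q) (n r d j : ℕ) (t : ℝ) :
    nodePoint q (n * q ^ j + r, d + j) t = nodePoint q (n, d) ((r + t) / (q : ℝ) ^ j) := by
  simp only [nodePoint, pow_add]
  push_cast
  field_simp
  ring

theorem nodePoint_child (hq : 0 < q) (I : ℕ × ℕ) (i : ℕ) (t : ℝ) :
    nodePoint q (child q I i) t = nodePoint q I ((i + t) / q) := by
  simpa only [pow_one, child] using nodePoint_descendant hq I.1 i I.2 1 t

theorem isNode_child_iff {i : ℕ} (hi : i < q) : IsNode q (child q I i) ↔ IsNode q I := by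
  simp only [IsNode, child, pow_succ]
  constructor <;> intro h <;> nlinarith

theorem isNode_descendant (hI : IsNode q I) {j r : ℕ} (hr : r < q ^ j) :
    IsNode q (I.1 * q ^ j + r, I.2 + j) := by
  have hle : (I.1 + 1) * q ^ j ≤ q ^ I.2 * q ^ j := Nat.mul_le_mul_right _ hI
  rw [IsNode, pow_add]
  linarith

theorem child_div_mod (q : ℕ) (n d : ℕ) : child q (n / q, d) (n % q) = (n, d + 1) := by
  rw [child, mul_comm, Nat.div_add_mod]

theorem nodePoint_mem_Icc (hI : IsNode q I) {t : ℝ} (ht : t ∈ Icc (0 : ℝ) 1) :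
    nodePoint q I t ∈ Icc (0 : ℝ) 1 := by
  have hle : (I.1 : ℝ) + 1 ≤ (q : ℝ) ^ I.2 := by exact_mod_cast hI
  have hpow : (0 : ℝ) < (q : ℝ) ^ I.2 := by linarith [Nat.cast_nonneg (α := ℝ) I.1]
  refine ⟨div_nonneg (add_nonneg (Nat.cast_nonneg _) ht.1) hpow.le, ?_⟩
  rw [nodePoint, div_le_one hpow]
  linarith [ht.2]

theorem nodePoint_strictMono (hq : 0 < q) (I : ℕ × ℕ) : StrictMono (nodePoint q I) :=
  fun s t hst => by
    simp only [nodePoint]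
    gcongr

theorem exists_nodePoint_eq (hq : 0 < q) (I : ℕ × ℕ) (t : ℝ) : ∃ s, nodePoint q I s = t :=
  ⟨t * (q : ℝ) ^ I.2 - I.1, by
    rw [nodePoint, add_sub_cancel, mul_div_cancel_right₀ _ (by positivity)]⟩

theorem eq_of_nodePoint_eq (hq : 2 ≤ q) (h₀ : nodePoint q I 0 = nodePoint q J 0)
    (h₁ : nodePoint q I 1 = nodePoint q J 1) : I = J := by
  simp only [nodePoint, add_div, add_zero] at h₀ h₁
  rw [h₀, add_right_inj, one_div, one_div, inv_inj] at h₁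
  have hdepth : I.2 = J.2 := Nat.pow_right_injective hq (by exact_mod_cast h₁)
  rw [hdepth, div_left_inj' (by positivity)] at h₀
  exact Prod.ext (by exact_mod_cast h₀) hdepth

theorem mapsNode_one (hI : IsNode q I) : MapsNode q 1 I I := ⟨hI, hI, fun _ _ => rfl⟩

theorem MapsNode.inv (h : MapsNode q f I J) : MapsNode q f⁻¹ J I :=
  ⟨h.target, h.source, fun t ht => by rw [Equiv.Perm.inv_eq_iff_eq, h.apply t ht]⟩

theorem MapsNode.mul (hf : MapsNode q f J K) (hg : MapsNode q g I J) : MapsNode q (f * g) I K :=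
  ⟨hg.source, hf.target, fun t ht => by rw [Equiv.Perm.mul_apply, hg.apply t ht, hf.apply t ht]⟩

theorem MapsNode.target_unique (hq : 2 ≤ q) (hJ : MapsNode q f I J) (hK : MapsNode q f I K) :
    J = K :=
  eq_of_nodePoint_eq hq ((hJ.apply 0 (by simp)).symm.trans (hK.apply 0 (by simp)))
    ((hJ.apply 1 (by simp)).symm.trans (hK.apply 1 (by simp)))

theorem MapsNode.source_unique (hq : 2 ≤ q) (hI : MapsNode q f I K) (hJ : MapsNode q f J K) :
    I = J :=
  hI.inv.target_unique hq hJ.inv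

theorem MapsNode.child (h : MapsNode q f I J) {i : ℕ} (hi : i < q) :
    MapsNode q f (child q I i) (child q J i) := by
  refine ⟨(isNode_child_iff hi).2 h.source, (isNode_child_iff hi).2 h.target, fun t ht => ?_⟩
  have hq : 0 < q := by omega
  rw [nodePoint_child hq, nodePoint_child hq]
  refine h.apply _ ⟨div_nonneg (add_nonneg (Nat.cast_nonneg i) ht.1) (Nat.cast_nonneg q), ?_⟩
  have hle : (i : ℝ) + 1 ≤ q := by exact_mod_cast hi
  rw [div_le_one (by positivity)]
  linarith [ht.2]

theorem notMem_carets_iff (hI : IsNode q I) : I ∉ carets q f ↔ ∃ J, MapsNode q f I J := by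
  simp [carets, hI]

theorem MapsNode.notMem_carets (h : MapsNode q f I J) : I ∉ carets q f :=
  (notMem_carets_iff h.source).2 ⟨J, h⟩

theorem carets_one (q : ℕ) : carets q 1 = ∅ :=
  eq_empty_of_forall_notMem fun _ hI => (mapsNode_one hI.1).notMem_carets hI

theorem mem_carets_of_child_mem {i : ℕ} (hi : i < q) (h : child q I i ∈ carets q f) :
    I ∈ carets q f := by
  refine ⟨(isNode_child_iff hi).1 h.1, fun J hJ => ?_⟩
  exact (hJ.child hi).notMem_carets h

theorem mem_carets_of_descendant {n d j : ℕ} (hq : 0 < q) (h : (n, d + j) ∈ carets q f) :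
    (n / q ^ j, d) ∈ carets q f := by
  induction j generalizing n with
  | zero => simpa using h
  | succ j ih =>
    rw [pow_succ', ← Nat.div_div_eq_div_mul]
    refine ih (mem_carets_of_child_mem (Nat.mod_lt n hq) ?_)
    rwa [child_div_mod]

theorem mem_carets_mul_iff (h : MapsNode q g I J) : I ∈ carets q (f * g) ↔ J ∈ carets q f := by
  refine ⟨fun hI => ⟨h.target, fun K hK => hI.2 K (hK.mul h)⟩,
    fun hJ => ⟨h.source, fun K hK => hJ.2 K ?_⟩⟩
  simpa using hK.mul h.inv

theorem mem_carets_of_mem_carets_mul (hI : I ∈ carets q (f * g)) (hg : I ∉ carets q g) :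
    ∃ J ∈ carets q f, J ∉ carets q g⁻¹ ∧ MapsNode q g I J := by
  obtain ⟨J, hJ⟩ := (notMem_carets_iff hI.1).1 hg
  exact ⟨J, (mem_carets_mul_iff hJ).1 hI, hJ.inv.notMem_carets, hJ⟩

end Node

section Finiteness

variable {q : ℕ} {f : Equiv.Perm ℝ} {I : ℕ × ℕ}

theorem mapsTo_Icc_of_mem_PLSet (hf : f ∈ PLSet q) : MapsTo f (Icc 0 1) (Icc 0 1) := fun _ ht =>
  ⟨hf.2.1 0 le_rfl ▸ hf.1 ht.1, hf.2.2.1 1 le_rfl ▸ hf.1 ht.2⟩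

theorem zpow_mul_div_pow (hq : 0 < q) {k : ℤ} {d e : ℕ} (he : (e : ℤ) = d - k) (t : ℝ) :
    (q : ℝ) ^ k * (t / (q : ℝ) ^ d) = t / (q : ℝ) ^ e := by
  rw [← zpow_natCast _ e, he, zpow_sub₀ (by positivity), zpow_natCast]
  field_simp

theorem exists_mapsNode_of_affine (hq : 0 < q) (hf : f ∈ PLSet q) (hI : IsNode q I)
    {k : ℤ} {c : ℝ}
    (haffine : ∀ t ∈ Icc (nodePoint q I 0) (nodePoint q I 1), f t = (q : ℝ) ^ k * t + c)
    {e : ℕ} (he : (e : ℤ) = I.2 - k) {z : ℤ} (hz : f (nodePoint q I 0) = z / (q : ℝ) ^ e) :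
    ∃ J, MapsNode q f I J := by
  have hpow : (0 : ℝ) < (q : ℝ) ^ e := by positivity
  have himage : ∀ t ∈ Icc (0 : ℝ) 1, f (nodePoint q I t) = (z + t) / (q : ℝ) ^ e := by
    intro t ht
    have hmono := (nodePoint_strictMono hq I).monotone
    rw [haffine _ ⟨hmono le_rfl, hmono zero_le_one⟩] at hz
    rw [haffine _ ⟨hmono ht.1, hmono ht.2⟩, add_div, ← hz, ← zpow_mul_div_pow hq he]
    simp only [nodePoint]
    ring
  have hbounds : ∀ t ∈ Icc (0 : ℝ) 1, (z + t) / (q : ℝ) ^ e ∈ Icc (0 : ℝ) 1 := fun t ht =>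
    himage t ht ▸ mapsTo_Icc_of_mem_PLSet hf (nodePoint_mem_Icc hI ht)
  have hz₀ : 0 ≤ z := by
    have h := (hbounds 0 (by simp)).1
    rw [add_zero, le_div_iff₀ hpow, zero_mul] at h
    exact_mod_cast h
  have hz₁ : z + 1 ≤ (q : ℤ) ^ e := by
    have h := (hbounds 1 (by simp)).2
    rw [div_le_one hpow] at h
    exact_mod_cast h
  lift z to ℕ using hz₀
  exact ⟨(z, e), hI, by exact_mod_cast hz₁, himage⟩

theorem exists_mapsNode_descendant (hq : 0 < q) (hf : f ∈ PLSet q) (hI : IsNode q I)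
    {k : ℤ} {c : ℝ} (haffine : ∀ t ∈ Icc (nodePoint q I 0) (nodePoint q I 1),
      f t = (q : ℝ) ^ k * t + c) :
    ∃ D : ℕ, ∀ j ≥ D, ∀ m, m / q ^ j = I.1 → ∃ J, MapsNode q f (m, I.2 + j) J := by
  obtain ⟨R, hR⟩ := (isPAdicRational_apply hq (mem_PLSet_iff.1 hf).1
    (isPAdicRational_natCast_div_pow q I.1 I.2)).exists_eq_div_pow hq
  refine ⟨R + k.natAbs, fun j hj m hm => ?_⟩
  obtain ⟨e, he⟩ : ∃ e : ℕ, (e : ℤ) = (I.2 + j : ℕ) - k := ⟨(I.2 + j - k).toNat, by omega⟩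
  obtain ⟨z, hz⟩ := hR e (by omega)
  obtain ⟨r, hr, rfl⟩ : ∃ r < q ^ j, m = I.1 * q ^ j + r :=
    ⟨m % q ^ j, Nat.mod_lt m (by positivity), by rw [← hm, mul_comm, Nat.div_add_mod]⟩
  have hr' : (r : ℝ) + 1 ≤ (q : ℝ) ^ j := by exact_mod_cast hr
  have hlower : 0 ≤ ((r : ℝ) + 0) / (q : ℝ) ^ j := by positivity
  have hupper : ((r : ℝ) + 1) / (q : ℝ) ^ j ≤ 1 := (div_le_one (by positivity)).2 hr'
  have hdesc : ∀ t, nodePoint q (I.1 * q ^ j + r, I.2 + j) t = nodePoint q I _ :=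
    nodePoint_descendant hq I.1 r I.2 j
  have hmono := (nodePoint_strictMono hq I).monotone
  refine exists_mapsNode_of_affine hq hf (isNode_descendant hI hr) (k := k) (c := c)
    (fun t ht => haffine t ?_) he (z := z + r) ?_
  · rw [hdesc, hdesc] at ht
    exact ⟨(hmono hlower).trans ht.1, ht.2.trans (hmono hupper)⟩
  · have hleft : (z : ℝ) / (q : ℝ) ^ e = (q : ℝ) ^ k * nodePoint q I 0 + c := by
      rw [← haffine _ ⟨le_rfl, hmono zero_le_one⟩, ← hz, nodePoint, add_zero]
    have hright := haffine _ ⟨hmono hlower, hmono ((div_le_div_of_nonneg_right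
      (by simp) (by positivity)).trans hupper)⟩
    rw [← hdesc] at hright
    rw [hright, Int.cast_add, Int.cast_natCast, add_div, hleft, ← zpow_mul_div_pow hq he]
    simp only [nodePoint, pow_add]
    push_cast
    field_simp
    ring

theorem finite_carets_of_depth_lt (hq : 0 < q) {N : ℕ} (hN : ∀ I ∈ carets q f, I.2 < N) :
    (carets q f).Finite := by
  refine ((finite_Iio (q ^ N)).prod (finite_Iio N)).subset fun I hI => ⟨?_, hN I hI⟩
  exact hI.1.trans_le (Nat.pow_le_pow_right hq (hN I hI).le)

theorem finite_carets (hq : 0 < q) (hf : f ∈ PLSet q) : (carets q f).Finite := by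
  obtain ⟨N, hN⟩ := exists_affine_on_grid hq (mem_PLSet_iff.1 hf).1
  choose k c haffine using hN N le_rfl
  have hdepth : ∀ n, n < q ^ N → ∃ D : ℕ, ∀ j ≥ D, ∀ m, m / q ^ j = n →
      ∃ J, MapsNode q f (m, N + j) J := fun n hn =>
    exists_mapsNode_descendant (I := (n, N)) hq hf hn (by simpa [nodePoint] using haffine n)
  choose! D hD using hdepth
  set j := (Finset.range (q ^ N)).sup D
  refine finite_carets_of_depth_lt hq (N := N + j) fun I hI => ?_
  by_contra! hle
  obtain ⟨i, hi⟩ := Nat.exists_eq_add_of_le hle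
  have hcaret : (I.1 / q ^ i, N + j) ∈ carets q f := mem_carets_of_descendant hq (hi ▸ hI)
  have hlt : I.1 / q ^ i / q ^ j < q ^ N := (mem_carets_of_descendant hq hcaret).1
  obtain ⟨J, hJ⟩ := hD _ hlt j (Finset.le_sup (Finset.mem_range.2 hlt)) _ rfl
  exact hJ.notMem_carets hcaret

end Finiteness

section CaretSum

variable {q : ℕ} {f g x : Equiv.Perm ℝ} {w : ℕ × ℕ → ℕ}

/-- The total weight of the carets of `f`; the junk value `0` of an infinite sum does not occur for
`f ∈ PLSet q`, see `finite_carets`. -/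
noncomputable def caretSum (q : ℕ) (w : ℕ × ℕ → ℕ) (f : Equiv.Perm ℝ) : ℕ :=
  ∑ᶠ I ∈ carets q f, w I

/-- The number of carets in the reduced tree pair diagram of `f`. -/
noncomputable def numCarets (q : ℕ) (f : Equiv.Perm ℝ) : ℕ := (carets q f).ncard

/-- The weight `w` takes the same value on two nodes whenever `g` maps one onto the other. -/
def IsInvariantWeight (q : ℕ) (w : ℕ × ℕ → ℕ) (g : Equiv.Perm ℝ) : Prop :=
  ∀ I J, MapsNode q g I J → w I = w J

theorem IsInvariantWeight.inv (hw : IsInvariantWeight q w g) : IsInvariantWeight q w g⁻¹ :=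
  fun I J h => (hw J I (by simpa using h.inv)).symm

theorem caretSum_one (q : ℕ) (f : Equiv.Perm ℝ) : caretSum q (fun _ => 1) f = numCarets q f :=
  finsum_one

theorem caretSum_le_mul_numCarets {c : ℕ} (hf : (carets q f).Finite) (hw : ∀ I, w I ≤ c) :
    caretSum q w f ≤ c * numCarets q f := by
  rw [caretSum, finsum_mem_eq_finite_toFinset_sum _ hf, numCarets, ncard_eq_toFinset_card _ hf,
    mul_comm]
  exact Finset.sum_le_card_nsmul _ _ c fun I _ => hw I

theorem caretSum_mul_le (hq : 2 ≤ q) (hw : IsInvariantWeight q w g)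
    (hfg : (carets q (f * g)).Finite) (hg : (carets q g).Finite) :
    caretSum q w (f * g) ≤ caretSum q w g + ∑ᶠ J ∈ carets q f \ carets q g⁻¹, w J := by
  choose! e he using fun I (hI : I ∈ carets q (f * g) \ carets q g) =>
    mem_carets_of_mem_carets_mul hI.1 hI.2
  have hbij : BijOn e (carets q (f * g) \ carets q g) (carets q f \ carets q g⁻¹) := by
    refine ⟨fun I hI => ⟨(he I hI).1, (he I hI).2.1⟩, fun I hI J hJ heq => ?_, fun J hJ => ?_⟩
    · exact (he I hI).2.2.source_unique hq (heq ▸ (he J hJ).2.2)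
    · obtain ⟨I, hI⟩ := (notMem_carets_iff hJ.1.1).1 hJ.2
      have hIJ : MapsNode q g I J := by simpa using hI.inv
      have hmem : I ∈ carets q (f * g) \ carets q g :=
        ⟨(mem_carets_mul_iff hIJ).2 hJ.1, hIJ.notMem_carets⟩
      exact ⟨I, hmem, (he I hmem).2.2.target_unique hq hIJ⟩
  rw [caretSum, ← finsum_mem_inter_add_sdiff (carets q g) hfg,
    finsum_mem_eq_of_bijOn e hbij fun I hI => hw _ _ (he I hI).2.2]
  gcongr
  rw [caretSum, ← finsum_mem_add_sdiff (inter_subset_right (s := carets q (f * g))) hg]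
  exact Nat.le_add_right _ _

theorem numCarets_mul_le (hq : 2 ≤ q) (hf : f ∈ PLSet q) (hg : g ∈ PLSet q) :
    numCarets q (f * g) ≤ numCarets q f + numCarets q g := by
  have hq₀ : 0 < q := by omega
  have hle := caretSum_mul_le (w := fun _ => 1) hq (fun _ _ _ => rfl)
    (finite_carets hq₀ (mul_mem_PLSet hq₀ hf hg)) (finite_carets hq₀ hg)
  rw [caretSum_one, caretSum_one, finsum_one] at hle
  have hsub := ncard_le_ncard (sdiff_subset (s := carets q f) (t := carets q g⁻¹))
    (finite_carets hq₀ hf)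
  simp only [numCarets] at *
  omega

theorem caretSum_mul_inv_add_le (hq : 2 ≤ q) (hw : IsInvariantWeight q w x) (hf : f ∈ PLSet q)
    (hx : x ∈ PLSet q) (hsub : carets q x ⊆ carets q f) :
    caretSum q w (f * x⁻¹) + caretSum q w x ≤ caretSum q w f + caretSum q w x⁻¹ := by
  have hq₀ : 0 < q := by omega
  have hx' := inv_mem_PLSet hq₀ hx
  have hle := caretSum_mul_le hq hw.inv (finite_carets hq₀ (mul_mem_PLSet hq₀ hf hx'))
    (finite_carets hq₀ hx')
  have hsplit := finsum_mem_add_sdiff (f := w) hsub (finite_carets hq₀ hf)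
  rw [inv_inv] at hle
  simp only [caretSum] at *
  omega

theorem carets_inv_mul_inv_subset (hsub : carets q x ⊆ carets q f) :
    carets q (f * x⁻¹)⁻¹ ⊆ carets q f⁻¹ := by
  rw [mul_inv_rev, inv_inv]
  intro I hI
  by_contra hIf
  obtain ⟨J, hJx, hJf, -⟩ := mem_carets_of_mem_carets_mul hI hIf
  exact hJf (by simpa using hsub hJx)

/-- The number of carets in the two trees of the reduced tree pair diagram of `f`, computed as the
carets of `f` and of `f⁻¹`. -/
noncomputable def treePairSize (q : ℕ) (f : Equiv.Perm ℝ) : ℕ := numCarets q f + numCarets q f⁻¹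

theorem isSubadditiveOn_treePairSize (hq : 2 ≤ q) {H : Subgroup (Equiv.Perm ℝ)}
    (hH : (H : Set (Equiv.Perm ℝ)) = PLSet q) : IsSubadditiveOn H (treePairSize q) := by
  have hmem : ∀ f ∈ H, f ∈ PLSet q ∧ f⁻¹ ∈ PLSet q := fun f hf => by
    rw [← hH]
    exact ⟨hf, H.inv_mem hf⟩
  refine ⟨by simp [treePairSize, numCarets, carets_one], fun f hf g hg => ?_⟩
  have hmul := numCarets_mul_le hq (hmem f hf).1 (hmem g hg).1
  have hinv := numCarets_mul_le hq (hmem g hg).2 (hmem f hf).2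
  rw [← mul_inv_rev] at hinv
  simp only [treePairSize]
  omega

end CaretSum

section Powers

variable {p k : ℕ} {f : Equiv.Perm ℝ} {n d : ℕ}

theorem nodePoint_pow (p k n d : ℕ) : nodePoint (p ^ k) (n, d) = nodePoint p (n, k * d) := by
  ext t
  rw [nodePoint, nodePoint, Nat.cast_pow, ← pow_mul]

theorem isNode_pow_iff : IsNode (p ^ k) (n, d) ↔ IsNode p (n, k * d) := by
  rw [IsNode, IsNode, ← pow_mul]

theorem MapsNode.eq_affine {q : ℕ} (hq : 0 < q) {I J : ℕ × ℕ} (h : MapsNode q f I J) :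
    ∀ y ∈ Icc (nodePoint q I 0) (nodePoint q I 1),
      f y = (q : ℝ) ^ (I.2 - J.2 : ℤ) * y + (J.1 - I.1) / (q : ℝ) ^ J.2 := by
  have hmono := nodePoint_strictMono hq I
  intro y hy
  obtain ⟨t, rfl⟩ := exists_nodePoint_eq hq I y
  rw [h.apply t ⟨hmono.le_iff_le.1 hy.1, hmono.le_iff_le.1 hy.2⟩, nodePoint, nodePoint,
    zpow_sub₀ (by positivity), zpow_natCast, zpow_natCast]
  field_simp
  ring

theorem slope_eq_of_eventuallyEq {a b c d t : ℝ}
    (h : ∀ᶠ s in 𝓝 t, a * s + c = b * s + d) : a = b := by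
  simpa using Filter.EventuallyEq.deriv_eq h

theorem exists_slope_eq_of_mapsNode {q : ℕ} (hf : f ∈ PLSet q) {p : ℕ} (hp : 0 < p)
    {I J : ℕ × ℕ} (h : MapsNode p f I J) : ∃ l : ℤ, (q : ℝ) ^ l = (p : ℝ) ^ (I.2 - J.2 : ℤ) := by
  obtain ⟨⟨-, -, B, -, haffine⟩, -⟩ := mem_PLSet_iff.1 hf
  have hlt : nodePoint p I 0 < nodePoint p I 1 := nodePoint_strictMono hp I zero_lt_one
  obtain ⟨y, hy, hyB⟩ := (Ioo_infinite hlt).exists_notMem_finset B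
  obtain ⟨l, c, hnear⟩ := haffine y hyB
  refine ⟨l, slope_eq_of_eventuallyEq (t := y) (c := c)
    (d := (J.1 - I.1) / (p : ℝ) ^ J.2) ?_⟩
  filter_upwards [hnear, Ioo_mem_nhds hy.1 hy.2] with s hs hmem
  rw [← hs, h.eq_affine hp s (Ioo_subset_Icc_self hmem)]

theorem mem_carets_of_mem_carets_pow (hp : 2 ≤ p) (hf : f ∈ PLSet (p ^ k))
    (h : (n, d) ∈ carets (p ^ k) f) : (n, k * d) ∈ carets p f := by
  refine ⟨isNode_pow_iff.1 h.1, fun ⟨m, e⟩ hJ => ?_⟩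
  obtain ⟨l, hl⟩ := exists_slope_eq_of_mapsNode hf (by omega) hJ
  have hkl : (k : ℤ) * l = k * d - e := by
    rw [Nat.cast_pow, ← zpow_natCast, ← zpow_mul] at hl
    exact_mod_cast zpow_right_injective₀ (by positivity) (by norm_cast; omega) hl
  obtain ⟨e, rfl⟩ : k ∣ e := by
    have hdvd : (k : ℤ) ∣ e := ⟨d - l, by linarith⟩
    exact_mod_cast hdvd
  refine h.2 (m, e) ⟨h.1, isNode_pow_iff.2 hJ.target, ?_⟩
  rw [nodePoint_pow, nodePoint_pow]
  exact hJ.apply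

theorem numCarets_pow_le (hp : 2 ≤ p) (hk : 1 ≤ k) (hf : f ∈ PLSet (p ^ k)) :
    numCarets (p ^ k) f ≤ numCarets p f := by
  refine ncard_le_ncard_of_injOn (fun I => (I.1, k * I.2))
    (fun I hI => mem_carets_of_mem_carets_pow hp hf hI) ?_
    (finite_carets (by omega) (PLSet_pow_subset p k hf))
  rintro ⟨n, d⟩ - ⟨m, e⟩ - h
  simpa [(Nat.ne_of_gt hk)] using h

theorem treePairSize_pow_le (hp : 2 ≤ p) (hk : 1 ≤ k) (hf : f ∈ PLSet (p ^ k)) :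
    treePairSize (p ^ k) f ≤ treePairSize p f :=
  add_le_add (numCarets_pow_le hp hk hf)
    (numCarets_pow_le hp hk (inv_mem_PLSet (by positivity) hf))

end Powers

section Bend

variable {q : ℕ} {b t : ℝ}

/-- The homeomorphism of `ℝ` that is the identity up to `b` and has slope `q` beyond `b`. -/
noncomputable def bend (hq : 0 < q) (b : ℝ) : Equiv.Perm ℝ where
  toFun t := if t ≤ b then t else b + q * (t - b)
  invFun t := if t ≤ b then t else b + (t - b) / q
  left_inv t := by
    dsimp only
    split_ifs with h h'
    · rfl
    · have : 0 < q * (t - b) := mul_pos (by positivity) (by linarith)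
      linarith
    · field_simp
      ring
  right_inv t := by
    dsimp only
    split_ifs with h h'
    · rfl
    · have : 0 < (t - b) / q := div_pos (by linarith) (by positivity)
      linarith
    · field_simp
      ring

theorem bend_of_le (hq : 0 < q) (h : t ≤ b) : bend hq b t = t := if_pos h

theorem bend_of_ge (hq : 0 < q) (h : b ≤ t) : bend hq b t = b + q * (t - b) := by
  obtain rfl | h := h.eq_or_lt
  · rw [bend_of_le hq le_rfl, sub_self, mul_zero, add_zero]
  · exact if_neg h.not_ge

theorem bend_inv_of_le (hq : 0 < q) (h : t ≤ b) : (bend hq b)⁻¹ t = t := by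
  rw [Equiv.Perm.inv_eq_iff_eq, bend_of_le hq h]

theorem bend_inv_of_ge (hq : 0 < q) (h : b ≤ t) : (bend hq b)⁻¹ t = b + (t - b) / q := by
  have hle : 0 ≤ (t - b) / q := div_nonneg (by linarith) (by positivity)
  rw [Equiv.Perm.inv_eq_iff_eq, bend_of_ge hq (by linarith)]
  field_simp
  ring

theorem bend_mem_halfLinePL (hq : 0 < q) (hb : 0 ≤ b) (hb' : IsPAdicRational q b) :
    bend hq b ∈ halfLinePL q := by
  refine ⟨fun s t hst => ?_, fun t ht => bend_of_le hq (ht.trans hb), {b}, by simpa, fun t ht => ?_⟩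
  · obtain hs | hs := le_total s b <;> obtain ht | ht := le_total t b
    · rwa [bend_of_le hq hs, bend_of_le hq ht]
    · have : 0 ≤ q * (t - b) := mul_nonneg (by positivity) (by linarith)
      rw [bend_of_le hq hs, bend_of_ge hq ht]
      linarith
    · rw [le_antisymm hst (ht.trans hs)]
    · rw [bend_of_ge hq hs, bend_of_ge hq ht]
      gcongr
  · obtain h | h := lt_or_gt_of_ne (Finset.notMem_singleton.1 ht)
    · refine ⟨0, 0, ?_⟩
      filter_upwards [Iio_mem_nhds h] with s hs
      rw [bend_of_le hq hs.le, zpow_zero, one_mul, add_zero]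
    · refine ⟨1, b - q * b, ?_⟩
      filter_upwards [Ioi_mem_nhds h] with s hs
      rw [bend_of_ge hq hs.le, zpow_one]
      ring

/-- Four bends that stretch `[0, g / q]` to `[0, g]`, translate `[g / q, 1]` and compress
`[1, 1 + g]` to `[1 + g - g / q, 1 + g]`. -/
noncomputable def rotation (hq : 0 < q) (g : ℕ) : Equiv.Perm ℝ :=
  bend hq 0 * (bend hq (g / q))⁻¹ * (bend hq 1)⁻¹ * bend hq (1 + g)

theorem nodePoint_bend (hq : 0 < q) (I : ℕ × ℕ) (b t : ℝ) :
    nodePoint q I (bend hq b t) = bend hq (nodePoint q I b) (nodePoint q I t) := by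
  obtain h | h := le_total t b
  · rw [bend_of_le hq h, bend_of_le hq ((nodePoint_strictMono hq I).monotone h)]
  · rw [bend_of_ge hq h, bend_of_ge hq ((nodePoint_strictMono hq I).monotone h)]
    simp only [nodePoint]
    ring

theorem nodePoint_bend_inv (hq : 0 < q) (I : ℕ × ℕ) (b t : ℝ) :
    nodePoint q I ((bend hq b)⁻¹ t) = (bend hq (nodePoint q I b))⁻¹ (nodePoint q I t) := by
  rw [Equiv.Perm.eq_inv_iff_eq, ← nodePoint_bend, ← Equiv.Perm.mul_apply, mul_inv_cancel,
    Equiv.Perm.one_apply]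

variable {g : ℕ}

theorem rotation_of_nonpos (hq : 0 < q) (ht : t ≤ 0) : rotation hq g t = t := by
  have hg : (0 : ℝ) ≤ g / q := by positivity
  simp only [rotation, Equiv.Perm.mul_apply]
  rw [bend_of_le hq (by linarith : t ≤ 1 + g), bend_inv_of_le hq (by linarith : t ≤ 1),
    bend_inv_of_le hq (ht.trans hg), bend_of_le hq ht]

theorem rotation_of_le (hq : 0 < q) (hg : g ≤ q) (h₀ : 0 ≤ t) (h : t ≤ g / q) :
    rotation hq g t = q * t := by
  have hg' : (g : ℝ) / q ≤ 1 := by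
    rw [div_le_one (by positivity)]
    exact_mod_cast hg
  simp only [rotation, Equiv.Perm.mul_apply]
  rw [bend_of_le hq (by linarith : t ≤ 1 + g), bend_inv_of_le hq (h.trans hg'), bend_inv_of_le hq h,
    bend_of_ge hq h₀, sub_zero, zero_add]

theorem rotation_of_le_one (hq : 0 < q) (h : g / q ≤ t) (h₁ : t ≤ 1) :
    rotation hq g t = t + g - g / q := by
  have hg : (0 : ℝ) ≤ g / q := by positivity
  have hle : 0 ≤ (t - g / q) / q := div_nonneg (by linarith) (by positivity)
  simp only [rotation, Equiv.Perm.mul_apply]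
  rw [bend_of_le hq (by linarith : t ≤ 1 + g), bend_inv_of_le hq h₁, bend_inv_of_ge hq h,
    bend_of_ge hq (by linarith)]
  field_simp
  ring

theorem rotation_of_ge_one (hq : 0 < q) (hg : g ≤ q) (h₁ : 1 ≤ t) (h : t ≤ 1 + g) :
    rotation hq g t = 1 + g - g / q + (t - 1) / q := by
  have hg' : (g : ℝ) / q ≤ 1 := by
    rw [div_le_one (by positivity)]
    exact_mod_cast hg
  have hle : 0 ≤ (t - 1) / q := div_nonneg (by linarith) (by positivity)
  have hle' : 0 ≤ (1 + (t - 1) / q - g / q) / q := div_nonneg (by linarith) (by positivity)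
  have hg₀ : (0 : ℝ) ≤ g / q := by positivity
  simp only [rotation, Equiv.Perm.mul_apply]
  rw [bend_of_le hq h, bend_inv_of_ge hq h₁, bend_inv_of_ge hq (by linarith),
    bend_of_ge hq (by linarith)]
  field_simp
  ring

theorem rotation_of_ge (hq : 0 < q) (h : 1 + g ≤ t) : rotation hq g t = t := by
  have hq₀ : (0 : ℝ) < q := by positivity
  have h₃ : 0 ≤ q * (t - (1 + g)) := mul_nonneg hq₀.le (by linarith)
  have hcomm : 1 + (1 + g + q * (t - (1 + g)) - 1) / q = g / q + (t - g) := by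
    field_simp
    ring
  have h₂ : 0 ≤ (t - g) / q := div_nonneg (by linarith) hq₀.le
  simp only [rotation, Equiv.Perm.mul_apply]
  rw [bend_of_ge hq h, bend_inv_of_ge hq (by linarith : 1 ≤ 1 + g + q * (t - (1 + g))), hcomm,
    bend_inv_of_ge hq (by linarith), add_sub_cancel_left, bend_of_ge hq (by positivity)]
  field_simp
  ring

end Bend

section CaretMove

variable {q g i c : ℕ} {P I : ℕ × ℕ} {t : ℝ}

/-- The element of `F(q)` that moves a caret from the `i`-th to the `(i + g)`-th child of `P`: the
rotation transported to the interval of the `i`-th child and its `g` right siblings. -/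
noncomputable def caretMove (hq : 0 < q) (P : ℕ × ℕ) (i g : ℕ) : Equiv.Perm ℝ :=
  bend hq (nodePoint q (child q P i) 0) * (bend hq (nodePoint q (child q P i) (g / q)))⁻¹ *
    (bend hq (nodePoint q (child q P i) 1))⁻¹ * bend hq (nodePoint q (child q P i) (1 + g))

theorem caretMove_nodePoint (hq : 0 < q) (P : ℕ × ℕ) (i g : ℕ) (t : ℝ) :
    caretMove hq P i g (nodePoint q (child q P i) t) =
      nodePoint q (child q P i) (rotation hq g t) := by
  simp only [caretMove, rotation, Equiv.Perm.mul_apply, nodePoint_bend, nodePoint_bend_inv]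

theorem caretMove_of_le (hq : 0 < q) (ht : t ≤ nodePoint q (child q P i) 0) :
    caretMove hq P i g t = t := by
  obtain ⟨s, rfl⟩ := exists_nodePoint_eq hq (child q P i) t
  rw [caretMove_nodePoint, rotation_of_nonpos hq ((nodePoint_strictMono hq _).le_iff_le.1 ht)]

theorem caretMove_of_ge (hq : 0 < q) (ht : nodePoint q (child q P i) (1 + g) ≤ t) :
    caretMove hq P i g t = t := by
  obtain ⟨s, rfl⟩ := exists_nodePoint_eq hq (child q P i) t
  rw [caretMove_nodePoint, rotation_of_ge hq ((nodePoint_strictMono hq _).le_iff_le.1 ht)]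

theorem nodePoint_child_eq_sibling (q : ℕ) (P : ℕ × ℕ) (i c : ℕ) (t : ℝ) :
    nodePoint q (child q P c) t = nodePoint q (child q P i) (c - i + t) := by
  simp only [nodePoint, child]
  push_cast
  ring

theorem isPAdicRational_nodePoint (hq : 0 < q) (I : ℕ × ℕ) (ht : IsPAdicRational q t) :
    IsPAdicRational q (nodePoint q I t) := by
  obtain ⟨a, n, rfl⟩ := ht
  refine ⟨I.1 * (q : ℤ) ^ n + a, n + I.2, ?_⟩
  rw [nodePoint, pow_add]
  push_cast
  field_simp

theorem caretMove_mem_PLSet (hq : 0 < q) (hP : IsNode q P) (hig : i + g < q) :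
    caretMove hq P i g ∈ PLSet q := by
  have hbend : ∀ m d : ℕ, bend hq (nodePoint q (child q P i) (m / (q : ℝ) ^ d)) ∈ halfLinePL q :=
    fun m d => bend_mem_halfLinePL hq (by rw [nodePoint]; positivity)
      (isPAdicRational_nodePoint hq _ (isPAdicRational_natCast_div_pow q m d))
  have h₀ := hbend 0 0
  have h₁ := hbend g 1
  have h₂ := hbend 1 0
  have h₃ := hbend (1 + g) 0
  simp only [pow_zero, pow_one, div_one, Nat.cast_zero, Nat.cast_one, Nat.cast_add] at h₀ h₁ h₂ h₃
  refine mem_PLSet_iff.2 ⟨mul_mem_halfLinePL hq (mul_mem_halfLinePL hq (mul_mem_halfLinePL hq h₀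
    (inv_mem_halfLinePL hq h₁)) (inv_mem_halfLinePL hq h₂)) h₃, fun t ht => ?_⟩
  refine caretMove_of_ge hq (le_trans ?_ ht)
  have hlast : (P.1 * q + i + (1 + g) : ℝ) ≤ (q : ℝ) ^ (P.2 + 1) := by
    have hPq : (P.1 + 1) * q ≤ q ^ P.2 * q := Nat.mul_le_mul_right q hP
    rw [← pow_succ] at hPq
    norm_cast
    linarith
  rw [nodePoint, div_le_one (by positivity)]
  simpa [child] using hlast

theorem nodePoint_grandchild (hq : 0 < q) (P : ℕ × ℕ) (i j c : ℕ) (t : ℝ) :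
    nodePoint q (child q (child q P j) c) t = nodePoint q (child q P i) (j - i + (c + t) / q) := by
  rw [nodePoint_child hq, nodePoint_child_eq_sibling q P i]

theorem caretMove_mapsNode_stretch (hq : 0 < q) (hP : IsNode q P) (hig : i + g < q) (hc : c < g) :
    MapsNode q (caretMove hq P i g) (child q (child q P i) c) (child q P (i + c)) := by
  refine ⟨(isNode_child_iff (by omega)).2 ((isNode_child_iff (by omega)).2 hP),
    (isNode_child_iff (by omega)).2 hP, fun t ht => ?_⟩
  have hcg : (c : ℝ) + 1 ≤ g := by exact_mod_cast hc
  rw [nodePoint_child hq, caretMove_nodePoint, rotation_of_le hq (by omega),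
    nodePoint_child_eq_sibling q P i (i + c)]
  · congr 1
    push_cast
    field_simp
    ring
  · exact div_nonneg (add_nonneg (Nat.cast_nonneg c) ht.1) (Nat.cast_nonneg q)
  · gcongr
    linarith [ht.2]

theorem caretMove_mapsNode_translate (hq : 0 < q) (hP : IsNode q P) (hig : i + g < q)
    (hc : g + c < q) :
    MapsNode q (caretMove hq P i g) (child q (child q P i) (g + c))
      (child q (child q P (i + g)) c) := by
  refine ⟨(isNode_child_iff hc).2 ((isNode_child_iff (by omega)).2 hP),
    (isNode_child_iff (by omega)).2 ((isNode_child_iff hig).2 hP), fun t ht => ?_⟩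
  have hcq : (g : ℝ) + c + 1 ≤ q := by exact_mod_cast hc
  rw [nodePoint_child hq, caretMove_nodePoint, rotation_of_le_one hq, nodePoint_grandchild hq P i]
  · congr 1
    push_cast
    field_simp
    ring
  · gcongr
    push_cast
    linarith [ht.1, Nat.cast_nonneg (α := ℝ) c]
  · rw [div_le_one (by positivity)]
    push_cast
    linarith [ht.2]

theorem caretMove_mapsNode_compress (hq : 0 < q) (hP : IsNode q P) (hig : i + g < q) (hc : c < g) :
    MapsNode q (caretMove hq P i g) (child q P (i + 1 + c))
      (child q (child q P (i + g)) (q - g + c)) := by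
  refine ⟨(isNode_child_iff (by omega)).2 hP,
    (isNode_child_iff (by omega)).2 ((isNode_child_iff hig).2 hP), fun t ht => ?_⟩
  have hcg : (c : ℝ) + 1 ≤ g := by exact_mod_cast hc
  rw [nodePoint_child_eq_sibling q P i, caretMove_nodePoint, rotation_of_ge_one hq (by omega),
    nodePoint_grandchild hq P i]
  · congr 1
    rw [Nat.cast_add (q - g), Nat.cast_sub (by omega)]
    push_cast
    field_simp
    ring
  · push_cast
    linarith [ht.1, Nat.cast_nonneg (α := ℝ) c]
  · push_cast
    linarith [ht.2]

theorem caretMove_mapsNode_sibling (hq : 0 < q) (hP : IsNode q P) (hc : c < q)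
    (hci : c < i ∨ i + g < c) :
    MapsNode q (caretMove hq P i g) (child q P c) (child q P c) := by
  have hnode := (isNode_child_iff hc).2 hP
  refine ⟨hnode, hnode, fun t ht => ?_⟩
  rw [nodePoint_child_eq_sibling q P i]
  have hmono := (nodePoint_strictMono hq (child q P i)).monotone
  obtain hlt | hgt := hci
  · have hle : (c : ℝ) + 1 ≤ i := by exact_mod_cast hlt
    exact caretMove_of_le hq (hmono (by linarith [ht.2]))
  · have hle : (i : ℝ) + g + 1 ≤ c := by exact_mod_cast hgt
    exact caretMove_of_ge hq (hmono (by linarith [ht.1]))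

end CaretMove

section IsCaretMove

variable {q a b g i : ℕ} {P I : ℕ × ℕ} {f x : Equiv.Perm ℝ} {w : ℕ × ℕ → ℕ}

/-- The nodes on the path from the root to `I`, both ends included. -/
def ancestors (q : ℕ) (I : ℕ × ℕ) : Set (ℕ × ℕ) := {J | J.2 ≤ I.2 ∧ J.1 = I.1 / q ^ (I.2 - J.2)}

theorem ancestors_subset_carets (hq : 0 < q) (hI : I ∈ carets q f) :
    ancestors q I ⊆ carets q f := by
  rintro ⟨m, e⟩ ⟨hle, hm⟩
  dsimp only at hle hm
  exact hm ▸ mem_carets_of_descendant hq (by rwa [Nat.add_sub_cancel' hle])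

/-- The two trees of the reduced tree pair diagram of `x` consist of the path from the root to `P`
and one more caret, at the child `a` of `P` in the domain and at the child `b` in the target. -/
structure IsCaretMove (q : ℕ) (P : ℕ × ℕ) (a b : ℕ) (x : Equiv.Perm ℝ) : Prop where
  mem_PLSet : x ∈ PLSet q
  carets_eq : carets q x = insert (child q P a) (ancestors q P)
  carets_inv_eq : carets q x⁻¹ = insert (child q P b) (ancestors q P)

theorem IsCaretMove.inv (hq : 0 < q) (h : IsCaretMove q P a b x) : IsCaretMove q P b a x⁻¹ :=
  ⟨inv_mem_PLSet hq h.mem_PLSet, h.carets_inv_eq, by rw [inv_inv, h.carets_eq]⟩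

theorem caretSum_insert_ancestors (hq : 0 < q) (hf : f ∈ PLSet q)
    (h : carets q f = insert (child q P a) (ancestors q P)) :
    caretSum q w f = w (child q P a) + ∑ᶠ I ∈ ancestors q P, w I := by
  rw [caretSum, h, finsum_mem_insert]
  · exact fun hmem => absurd hmem.1 (by simp [child])
  · exact (finite_carets hq hf).subset (h ▸ subset_insert _ _)

theorem IsCaretMove.carets_subset (hq : 0 < q) (hx : IsCaretMove q P a b x)
    (ha : child q P a ∈ carets q f) (haq : a < q) : carets q x ⊆ carets q f := by
  rw [hx.carets_eq, insert_subset_iff]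
  exact ⟨ha, ancestors_subset_carets hq (mem_carets_of_child_mem haq ha)⟩

theorem IsCaretMove.caretSum_mul_inv_add_le (hq : 2 ≤ q) (hx : IsCaretMove q P a b x)
    (haq : a < q) (hf : f ∈ PLSet q) (hw : IsInvariantWeight q w x)
    (ha : child q P a ∈ carets q f) :
    caretSum q w (f * x⁻¹) + w (child q P a) ≤ caretSum q w f + w (child q P b) := by
  have hq₀ : 0 < q := by omega
  have hle := Thompson.caretSum_mul_inv_add_le hq hw hf hx.mem_PLSet (hx.carets_subset hq₀ ha haq)
  rw [caretSum_insert_ancestors hq₀ hx.mem_PLSet hx.carets_eq,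
    caretSum_insert_ancestors hq₀ (hx.inv hq₀).mem_PLSet hx.carets_inv_eq] at hle
  omega

theorem carets_eq_insert_ancestors (hq : 0 < q)
    (houter : ∀ I, IsNode q I → I.2 ≤ P.2 → I ∉ ancestors q P → I ∉ carets q f)
    (hsibling : ∀ c < q, c ≠ i → child q P c ∉ carets q f)
    (hgrandchild : ∀ c < q, child q (child q P i) c ∉ carets q f)
    (hi : i < q) (hmem : child q P i ∈ carets q f) :
    carets q f = insert (child q P i) (ancestors q P) := by
  have hshallow : ∀ I ∈ carets q f, I.2 ≤ P.2 → I ∈ ancestors q P := fun I hI hle =>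
    by_contra fun hnot => houter I hI.1 hle hnot hI
  have hchild : ∀ n, (n, P.2 + 1) ∈ carets q f → (n, P.2 + 1) = child q P i := fun n hn => by
    rw [← child_div_mod] at hn
    have hparent : n / q = P.1 := by
      simpa using (hshallow _ (mem_carets_of_child_mem (Nat.mod_lt n hq) hn) le_rfl).2
    rw [hparent] at hn
    have hmod : n % q = i := by_contra fun hne => hsibling _ (Nat.mod_lt n hq) hne hn
    rw [← child_div_mod q, hparent, hmod]
  have hdepth : ∀ n j, (n, P.2 + 1 + (j + 1)) ∉ carets q f := fun n j hn => by
    have hn' : (n / q ^ j, P.2 + 1 + 1) ∈ carets q f :=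
      mem_carets_of_descendant hq (by rwa [add_assoc, add_comm 1 j])
    set m := n / q ^ j
    rw [← child_div_mod] at hn'
    rw [hchild _ (mem_carets_of_child_mem (Nat.mod_lt m hq) hn')] at hn'
    exact hgrandchild _ (Nat.mod_lt m hq) hn'
  refine Subset.antisymm (fun ⟨n, d⟩ hI => ?_) (insert_subset_iff.2 ⟨hmem,
    ancestors_subset_carets hq (mem_carets_of_child_mem hi hmem)⟩)
  obtain hle | hlt := le_or_gt d P.2
  · exact Or.inr (hshallow _ hI hle)
  obtain ⟨j, rfl⟩ := Nat.exists_eq_add_of_le (Nat.succ_le_of_lt hlt)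
  cases j with
  | zero => exact Or.inl (hchild n hI)
  | succ j => exact absurd hI (hdepth n j)

theorem caretMove_mapsNode_outer (hq : 0 < q) (hig : i + g < q) (hI : IsNode q I)
    (hle : I.2 ≤ P.2) (hnot : I ∉ ancestors q P) : MapsNode q (caretMove hq P i g) I I := by
  obtain ⟨n, e⟩ := I
  obtain ⟨j, hj : P.2 = e + j⟩ := Nat.exists_eq_add_of_le hle
  set r := P.1 % q ^ j
  have hP : P = (P.1 / q ^ j * q ^ j + r, e + j) := by
    rw [mul_comm, Nat.div_add_mod, ← hj]
  have hpoint : ∀ s, nodePoint q (child q P i) s =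
      nodePoint q (P.1 / q ^ j, e) ((r + (i + s) / q) / (q : ℝ) ^ j) := fun s => by
    rw [nodePoint_child hq, ← nodePoint_descendant hq, ← hP]
  have hne : n ≠ P.1 / q ^ j := fun h => hnot ⟨hle, by rw [hj, Nat.add_sub_cancel_left, h]⟩
  refine ⟨hI, hI, fun t ht => ?_⟩
  obtain hlt | hgt := hne.lt_or_gt
  · refine caretMove_of_le hq ?_
    have hcast : (n : ℝ) + 1 ≤ (P.1 / q ^ j : ℕ) := by exact_mod_cast hlt
    have hfrac : 0 ≤ (r + (i + 0) / q) / (q : ℝ) ^ j := by positivity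
    rw [hpoint, nodePoint, nodePoint]
    refine div_le_div_of_nonneg_right ?_ (by positivity)
    linarith [ht.2]
  · refine caretMove_of_ge hq ?_
    have hcast : ((P.1 / q ^ j : ℕ) : ℝ) + 1 ≤ n := by exact_mod_cast hgt
    have hr : (r : ℝ) + 1 ≤ (q : ℝ) ^ j := by exact_mod_cast Nat.mod_lt P.1 (pow_pos hq j)
    have higq : ((i : ℝ) + (1 + g)) / q ≤ 1 := by
      rw [div_le_one (by positivity)]
      norm_cast
      omega
    have hfrac : (r + (i + (1 + g)) / q) / (q : ℝ) ^ j ≤ 1 := by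
      rw [div_le_one (by positivity)]
      linarith
    rw [hpoint, nodePoint, nodePoint]
    refine div_le_div_of_nonneg_right ?_ (by positivity)
    linarith [ht.1]

theorem carets_caretMove (hq : 2 ≤ q) (hq₀ : 0 < q) (hP : IsNode q P) (hg : 0 < g)
    (hig : i + g < q) :
    carets q (caretMove hq₀ P i g) = insert (child q P i) (ancestors q P) := by
  refine carets_eq_insert_ancestors hq₀ (fun I hI hle hnot => ?_) (fun c hc hne => ?_)
    (fun c hc => ?_) (by omega) ⟨(isNode_child_iff (by omega)).2 hP, fun J hJ => ?_⟩
  · exact (caretMove_mapsNode_outer hq₀ hig hI hle hnot).notMem_carets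
  · by_cases hci : c < i ∨ i + g < c
    · exact (caretMove_mapsNode_sibling hq₀ hP hc hci).notMem_carets
    · obtain ⟨e, rfl⟩ : ∃ e, c = i + 1 + e := Nat.exists_eq_add_of_le (by omega)
      exact (caretMove_mapsNode_compress hq₀ hP hig (by omega)).notMem_carets
  · obtain hcg | hgc := Nat.lt_or_ge c g
    · exact (caretMove_mapsNode_stretch hq₀ hP hig hcg).notMem_carets
    · obtain ⟨e, rfl⟩ := Nat.exists_eq_add_of_le hgc
      exact (caretMove_mapsNode_translate hq₀ hP hig hc).notMem_carets
  · have hstretch := (hJ.child hq₀).target_unique hq (caretMove_mapsNode_stretch hq₀ hP hig hg)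
    have htranslate := (hJ.child (by omega)).target_unique hq
      (caretMove_mapsNode_translate (g := g) (c := 0) hq₀ hP hig (by omega))
    simp only [child, Prod.ext_iff] at hstretch htranslate
    omega

theorem carets_caretMove_inv (hq : 2 ≤ q) (hq₀ : 0 < q) (hP : IsNode q P) (hg : 0 < g)
    (hig : i + g < q) :
    carets q (caretMove hq₀ P i g)⁻¹ = insert (child q P (i + g)) (ancestors q P) := by
  refine carets_eq_insert_ancestors hq₀ (fun I hI hle hnot => ?_) (fun c hc hne => ?_)
    (fun c hc => ?_) hig ⟨(isNode_child_iff hig).2 hP, fun J hJ => ?_⟩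
  · exact (caretMove_mapsNode_outer hq₀ hig hI hle hnot).inv.notMem_carets
  · by_cases hci : c < i ∨ i + g < c
    · exact (caretMove_mapsNode_sibling hq₀ hP hc hci).inv.notMem_carets
    · obtain ⟨e, rfl⟩ : ∃ e, c = i + e := Nat.exists_eq_add_of_le (by omega)
      exact (caretMove_mapsNode_stretch hq₀ hP hig (by omega)).inv.notMem_carets
  · obtain hcg | hgc := Nat.lt_or_ge c (q - g)
    · exact (caretMove_mapsNode_translate hq₀ hP hig (by omega)).inv.notMem_carets
    · obtain ⟨e, rfl⟩ := Nat.exists_eq_add_of_le hgc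
      exact (caretMove_mapsNode_compress hq₀ hP hig (by omega)).inv.notMem_carets
  · have htranslate := (hJ.child hq₀).target_unique hq
      (caretMove_mapsNode_translate (g := g) (c := 0) hq₀ hP hig (by omega)).inv
    have hcompress := (hJ.child (by omega)).target_unique hq
      (caretMove_mapsNode_compress hq₀ hP hig hg).inv
    simp only [child, Prod.ext_iff] at htranslate hcompress
    omega

theorem isCaretMove_caretMove (hq : 2 ≤ q) (hq₀ : 0 < q) (hP : IsNode q P) (hg : 0 < g)
    (hig : i + g < q) : IsCaretMove q P i (i + g) (caretMove hq₀ P i g) :=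
  ⟨caretMove_mem_PLSet hq₀ hP hig, carets_caretMove hq hq₀ hP hg hig,
    carets_caretMove_inv hq hq₀ hP hg hig⟩

end IsCaretMove

section Weight

variable {q : ℕ} {f : Equiv.Perm ℝ} {I J : ℕ × ℕ}

theorem MapsNode.fst_eq_zero_iff (hq : 0 < q) (hf : f ∈ PLSet q) (h : MapsNode q f I J) :
    I.1 = 0 ↔ J.1 = 0 := by
  have hend : ∀ K : ℕ × ℕ, nodePoint q K 0 = 0 ↔ K.1 = 0 := fun K => by
    rw [nodePoint, add_zero, div_eq_zero_iff, or_iff_left (by positivity), Nat.cast_eq_zero]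
  rw [← hend, ← hend, ← h.apply 0 (by simp), f.injective.eq_iff' (hf.2.1 0 le_rfl)]

theorem MapsNode.fst_add_one_eq_pow_iff (hq : 0 < q) (hf : f ∈ PLSet q) (h : MapsNode q f I J) :
    I.1 + 1 = q ^ I.2 ↔ J.1 + 1 = q ^ J.2 := by
  have hend : ∀ K : ℕ × ℕ, nodePoint q K 1 = 1 ↔ K.1 + 1 = q ^ K.2 := fun K => by
    rw [nodePoint, div_eq_one_iff_eq (by positivity)]
    norm_cast
  rw [← hend, ← hend, ← h.apply 1 (by simp), f.injective.eq_iff' (hf.2.2.1 1 le_rfl)]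

/-- The weight that counts the nodes on the left spine of the `q`-ary tree, i.e. those whose
interval starts at `0`. -/
def leftWeight (I : ℕ × ℕ) : ℕ := if I.1 = 0 then 1 else 0

/-- The weight that is `0` on the left spine of the `q`-ary tree, `1` on the right spine and `2` in
the interior; a move towards the left spine lowers it. -/
def offLeftWeight (q : ℕ) (I : ℕ × ℕ) : ℕ :=
  if I.1 = 0 then 0 else if I.1 + 1 = q ^ I.2 then 1 else 2

theorem isInvariantWeight_leftWeight (hq : 0 < q) (hf : f ∈ PLSet q) :
    IsInvariantWeight q leftWeight f := fun I J h => by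
  simp only [leftWeight, h.fst_eq_zero_iff hq hf]

theorem isInvariantWeight_offLeftWeight (hq : 0 < q) (hf : f ∈ PLSet q) :
    IsInvariantWeight q (offLeftWeight q) f := fun I J h => by
  simp only [offLeftWeight, h.fst_eq_zero_iff hq hf, h.fst_add_one_eq_pow_iff hq hf]

end Weight

section Reduction

variable {q : ℕ} {f x : Equiv.Perm ℝ}

theorem MapsNode.descendant {I J : ℕ × ℕ} (hq : 0 < q) (h : MapsNode q f I J) {j r : ℕ}
    (hr : r < q ^ j) :
    MapsNode q f (I.1 * q ^ j + r, I.2 + j) (J.1 * q ^ j + r, J.2 + j) := by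
  refine ⟨isNode_descendant h.source hr, isNode_descendant h.target hr, fun t ht => ?_⟩
  have hr' : (r : ℝ) + 1 ≤ (q : ℝ) ^ j := by exact_mod_cast hr
  have hfrac : (r + t) / (q : ℝ) ^ j ≤ 1 := by
    rw [div_le_one (by positivity)]
    linarith [ht.2]
  rw [nodePoint_descendant hq, nodePoint_descendant hq]
  exact h.apply _ ⟨div_nonneg (add_nonneg r.cast_nonneg ht.1) (by positivity), hfrac⟩

/-- The caret moves used to reduce tree pair diagrams. -/
def caretMoves (hq : 0 < q) : Set (Equiv.Perm ℝ) :=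
  insert (caretMove hq (q - 1, 1) 0 (q - 1))
    ((fun i => caretMove hq (0, 0) i (q - 1 - i)) '' Iio (q - 1))

theorem finite_caretMoves (hq : 0 < q) : (caretMoves hq).Finite :=
  ((finite_Iio (q - 1)).image _).insert _

theorem isNode_root (q : ℕ) : IsNode q (0, 0) := by simp [IsNode]

theorem isNode_last (hq : 0 < q) : IsNode q (q - 1, 1) := by
  simp only [IsNode, pow_one]
  omega

theorem caretMove_root_mem_caretMoves (hq : 0 < q) {i : ℕ} (hi : i < q - 1) :
    caretMove hq (0, 0) i (q - 1 - i) ∈ caretMoves hq :=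
  mem_insert_of_mem _ (mem_image_of_mem (fun i => caretMove hq (0, 0) i (q - 1 - i)) hi)

theorem caretMove_last_mem_caretMoves (hq : 0 < q) :
    caretMove hq (q - 1, 1) 0 (q - 1) ∈ caretMoves hq :=
  mem_insert _ _

theorem caretMoves_subset_PLSet (hq : 0 < q) : caretMoves hq ⊆ PLSet q := by
  rintro _ (rfl | ⟨i, hi : i < q - 1, rfl⟩)
  · exact caretMove_mem_PLSet hq (isNode_last hq) (by omega)
  · exact caretMove_mem_PLSet hq (isNode_root q) (by omega)

theorem isCaretMove_root (hq : 2 ≤ q) (hq₀ : 0 < q) {i : ℕ} (hi : i < q - 1) :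
    IsCaretMove q (0, 0) i (q - 1) (caretMove hq₀ (0, 0) i (q - 1 - i)) := by
  have hx := isCaretMove_caretMove (i := i) (g := q - 1 - i) hq hq₀ (isNode_root q) (by omega)
    (by omega)
  rwa [Nat.add_sub_cancel' hi.le] at hx

theorem isCaretMove_last (hq : 2 ≤ q) (hq₀ : 0 < q) :
    IsCaretMove q (q - 1, 1) 0 (q - 1) (caretMove hq₀ (q - 1, 1) 0 (q - 1)) := by
  simpa using isCaretMove_caretMove (i := 0) hq hq₀ (isNode_last hq₀) (by omega) (by omega)

theorem exists_near_first_child_notMem (hq : 2 ≤ q) (hq₀ : 0 < q) (hf : f ∈ PLSet q) :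
    ∃ f' ∈ PLSet q, (0, 1) ∉ carets q f' ∧ numCarets q f' ≤ numCarets q f ∧
      carets q f'⁻¹ ⊆ carets q f⁻¹ ∧ Near (caretMoves hq₀) (numCarets q f) f f' := by
  set x := caretMove hq₀ (0, 0) 0 (q - 1 - 0)
  have hx : IsCaretMove q (0, 0) 0 (q - 1) x := isCaretMove_root hq hq₀ (by omega)
  have step : ∀ h, (h ∈ PLSet q ∧ numCarets q h ≤ numCarets q f ∧ carets q h⁻¹ ⊆ carets q f⁻¹) →
      ¬(0, 1) ∉ carets q h → ∃ s, (s ∈ caretMoves hq₀ ∨ s⁻¹ ∈ caretMoves hq₀) ∧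
        (h * s ∈ PLSet q ∧ numCarets q (h * s) ≤ numCarets q f ∧
          carets q (h * s)⁻¹ ⊆ carets q f⁻¹) ∧
        caretSum q leftWeight (h * s) < caretSum q leftWeight h := by
    intro h ⟨hh, hnum, hinv⟩ hfirst
    have hchild : child q (0, 0) 0 ∈ carets q h := by simpa [child] using hfirst
    have hcount := hx.caretSum_mul_inv_add_le (w := fun _ => 1) hq hq₀ hh (fun _ _ _ => rfl) hchild
    have hleft := hx.caretSum_mul_inv_add_le hq hq₀ hh
      (isInvariantWeight_leftWeight hq₀ hx.mem_PLSet) hchild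
    have hlast : q - 1 ≠ 0 := by omega
    rw [caretSum_one, caretSum_one] at hcount
    simp only [leftWeight, child, zero_mul, zero_add, if_true, hlast, if_false] at hleft
    refine ⟨x⁻¹, Or.inr ?_, ⟨mul_mem_PLSet hq₀ hh (inv_mem_PLSet hq₀ hx.mem_PLSet), by omega, ?_⟩,
      Nat.lt_of_succ_le hleft⟩
    · rw [inv_inv]
      exact caretMove_root_mem_caretMoves hq₀ (by omega)
    · exact (carets_inv_mul_inv_subset (hx.carets_subset hq₀ hchild hq₀)).trans hinv
  obtain ⟨f', ⟨hf', hnum, hinv⟩, hfirst, hnear⟩ := exists_near_of_descent _ step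
    ⟨hf, le_rfl, subset_rfl⟩
  refine ⟨f', hf', hfirst, hnum, hinv, hnear.mono ?_⟩
  simpa using caretSum_le_mul_numCarets (c := 1) (finite_carets hq₀ hf)
    (fun I => by unfold leftWeight; split_ifs <;> omega)

/-- The carets below the first child of the root lie on the left spine. -/
def IsLeftBelowFirstChild (q : ℕ) (f : Equiv.Perm ℝ) : Prop :=
  ∀ n d, (n, d + 1) ∈ carets q f → n < q ^ d → n = 0

theorem isLeftBelowFirstChild_of_notMem (hq : 0 < q) (h : (0, 1) ∉ carets q f) :
    IsLeftBelowFirstChild q f := fun n d hn hlt => by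
  rw [add_comm] at hn
  have hfirst := mem_carets_of_descendant hq hn
  rw [Nat.div_eq_of_lt hlt] at hfirst
  exact absurd hfirst h

theorem IsLeftBelowFirstChild.mul_inv_of_fix (hf : IsLeftBelowFirstChild q f)
    (hq : 0 < q) (hx : ∀ t ≤ 1 / (q : ℝ), x t = t) : IsLeftBelowFirstChild q (f * x⁻¹) := by
  intro n d hn hlt
  have hfix : MapsNode q x⁻¹ (n, d + 1) (n, d + 1) :=
    MapsNode.inv ⟨hn.1, hn.1, fun t ht => hx _ ?_⟩
  · exact hf n d ((mem_carets_mul_iff hfix).1 hn) hlt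
  · have hcast : (n : ℝ) + 1 ≤ (q : ℝ) ^ d := by exact_mod_cast hlt
    rw [nodePoint, pow_succ, ← div_div]
    gcongr
    rw [div_le_one (by positivity)]
    linarith [ht.2]

theorem IsLeftBelowFirstChild.mul_caretMove (hq : 2 ≤ q) (hq₀ : 0 < q)
    (hf : IsLeftBelowFirstChild q f)
    (hmiddle : ∀ i, 1 ≤ i → i < q - 1 → (i, 1) ∉ carets q f)
    (hlast : ((q - 1) * q, 2) ∉ carets q f) :
    IsLeftBelowFirstChild q (f * caretMove hq₀ (0, 0) 0 (q - 1)) := by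
  set x := caretMove hq₀ (0, 0) 0 (q - 1)
  have hstretch : ∀ c < q - 1, MapsNode q x (c, 2) (c, 1) := fun c hc => by
    simpa [child] using caretMove_mapsNode_stretch (i := 0) hq₀ (isNode_root q) (by omega) hc
  have htranslate : MapsNode q x (q - 1, 2) ((q - 1) * q, 2) := by
    simpa [child] using caretMove_mapsNode_translate (i := 0) (g := q - 1) (c := 0) hq₀
      (isNode_root q) (by omega) (by omega)
  rintro n (_ | d) hn hlt
  · simpa using hlt
  have hn' : (n, 2 + d) ∈ carets q (f * x) := by rwa [add_comm]
  have hancestor := mem_carets_of_descendant hq₀ hn'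
  have hdiv : n / q ^ d < q := Nat.div_lt_of_lt_mul (by rwa [← pow_succ])
  by_cases hq₁ : n / q ^ d = q - 1
  · rw [hq₁] at hancestor
    exact absurd ((mem_carets_mul_iff htranslate).1 hancestor) hlast
  have hdiv' : n / q ^ d < q - 1 := lt_of_le_of_ne (Nat.le_pred_of_lt hdiv) hq₁
  have hcaret := (mem_carets_mul_iff (hstretch _ hdiv')).1 hancestor
  have hzero : n / q ^ d = 0 :=
    by_contra fun hne => hmiddle _ (Nat.pos_of_ne_zero hne) hdiv' hcaret
  have hnd : n < q ^ d := (Nat.div_eq_zero_iff_lt (by positivity)).1 hzero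
  have hmaps := (hstretch 0 (by omega)).descendant hq₀ hnd
  simp only [zero_mul, zero_add] at hmaps
  refine hf n d ?_ hnd
  rw [add_comm]
  exact (mem_carets_mul_iff hmaps).1 hn'

end Reduction

section ReductionStep

variable {q a b i : ℕ} {P I : ℕ × ℕ} {f s x : Equiv.Perm ℝ}

/-- Right multiplication by `s` moves a caret of `f` closer to the left spine, without creating a
caret of `f⁻¹` or spoiling the subtree below the first child of the root. -/
structure IsReductionStep (hq : 0 < q) (f s : Equiv.Perm ℝ) : Prop where
  mem_caretMoves : s ∈ caretMoves hq ∨ s⁻¹ ∈ caretMoves hq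
  mul_mem_PLSet : f * s ∈ PLSet q
  isLeftBelowFirstChild : IsLeftBelowFirstChild q (f * s)
  carets_inv_subset : carets q (f * s)⁻¹ ⊆ carets q f⁻¹
  caretSum_lt : caretSum q (offLeftWeight q) (f * s) < caretSum q (offLeftWeight q) f

theorem IsCaretMove.isReductionStep (hq : 2 ≤ q) (hq₀ : 0 < q) (hx : IsCaretMove q P a b x)
    (hmem : x ∈ caretMoves hq₀ ∨ x⁻¹ ∈ caretMoves hq₀) (hf : f ∈ PLSet q)
    (hleft : IsLeftBelowFirstChild q (f * x⁻¹)) (haq : a < q) (ha : child q P a ∈ carets q f)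
    (hlt : offLeftWeight q (child q P b) < offLeftWeight q (child q P a)) :
    IsReductionStep hq₀ f x⁻¹ := by
  have hsum := hx.caretSum_mul_inv_add_le hq haq hf
    (isInvariantWeight_offLeftWeight hq₀ hx.mem_PLSet) ha
  exact ⟨by rwa [inv_inv, or_comm], mul_mem_PLSet hq₀ hf (inv_mem_PLSet hq₀ hx.mem_PLSet), hleft,
    carets_inv_mul_inv_subset (hx.carets_subset hq₀ ha haq), by omega⟩

theorem offLeftWeight_last (hq : 2 ≤ q) : offLeftWeight q (q - 1, 1) = 1 := by
  have hne : q - 1 ≠ 0 := by omega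
  have hend : q - 1 + 1 = q := by omega
  simp [offLeftWeight, hne, hend]

theorem offLeftWeight_middle (hi : 1 ≤ i) (hiq : i < q - 1) : offLeftWeight q (i, 1) = 2 := by
  have hne : i ≠ 0 := by omega
  have hend : i + 1 ≠ q := by omega
  simp [offLeftWeight, hne, hend]

theorem offLeftWeight_last_child_zero (hq : 2 ≤ q) :
    offLeftWeight q (child q (q - 1, 1) 0) = 2 := by
  obtain ⟨r, rfl⟩ := Nat.exists_eq_add_of_le' hq
  have hend : (r + 1) * (r + 2) + 1 ≠ (r + 2) ^ 2 := by nlinarith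
  simp [offLeftWeight, child, hend]

theorem offLeftWeight_last_child_last (hq : 2 ≤ q) :
    offLeftWeight q (child q (q - 1, 1) (q - 1)) = 1 := by
  obtain ⟨r, rfl⟩ := Nat.exists_eq_add_of_le' hq
  have hend : (r + 1) * (r + 2) + (r + 1) + 1 = (r + 2) ^ 2 := by ring
  simp [offLeftWeight, child, hend]

theorem isReductionStep_of_middle_mem (hq : 2 ≤ q) (hq₀ : 0 < q) (hf : f ∈ PLSet q)
    (hleft : IsLeftBelowFirstChild q f) (hi : 1 ≤ i) (hiq : i < q - 1)
    (hmem : (i, 1) ∈ carets q f) :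
    IsReductionStep hq₀ f (caretMove hq₀ (0, 0) i (q - 1 - i))⁻¹ := by
  have hchild : ∀ j, child q (0, 0) j = (j, 1) := by simp [child]
  refine (isCaretMove_root hq hq₀ hiq).isReductionStep hq hq₀
    (Or.inl (caretMove_root_mem_caretMoves hq₀ hiq)) hf
    (hleft.mul_inv_of_fix hq₀ fun t ht => caretMove_of_le hq₀ (ht.trans ?_)) (by omega) ?_ ?_
  · have hcast : (1 : ℝ) ≤ i := by exact_mod_cast hi
    rw [hchild, nodePoint, pow_one, add_zero]
    gcongr
  · rwa [hchild]
  · rw [hchild, hchild, offLeftWeight_last hq, offLeftWeight_middle hi hiq]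
    exact one_lt_two

theorem isReductionStep_of_last_child_mem (hq : 2 ≤ q) (hq₀ : 0 < q) (hf : f ∈ PLSet q)
    (hleft : IsLeftBelowFirstChild q f) (hmem : child q (q - 1, 1) 0 ∈ carets q f) :
    IsReductionStep hq₀ f (caretMove hq₀ (q - 1, 1) 0 (q - 1))⁻¹ := by
  refine (isCaretMove_last hq hq₀).isReductionStep hq hq₀
    (Or.inl (caretMove_last_mem_caretMoves hq₀)) hf
    (hleft.mul_inv_of_fix hq₀ fun t ht => caretMove_of_le hq₀ (ht.trans ?_)) hq₀ hmem ?_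
  · have hcast : (1 : ℝ) ≤ (q - 1 : ℕ) := by
      exact_mod_cast (by omega : 1 ≤ q - 1)
    rw [nodePoint_child hq₀, Nat.cast_zero, add_zero, zero_div, nodePoint, pow_one, add_zero]
    gcongr
  · rw [offLeftWeight_last_child_last hq, offLeftWeight_last_child_zero hq]
    exact one_lt_two

theorem isReductionStep_of_last_mem (hq : 2 ≤ q) (hq₀ : 0 < q) (hf : f ∈ PLSet q)
    (hleft : IsLeftBelowFirstChild q f)
    (hmiddle : ∀ i, 1 ≤ i → i < q - 1 → (i, 1) ∉ carets q f)
    (hchild : child q (q - 1, 1) 0 ∉ carets q f) (hmem : (q - 1, 1) ∈ carets q f) :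
    IsReductionStep hq₀ f (caretMove hq₀ (0, 0) 0 (q - 1)) := by
  have hx : IsCaretMove q (0, 0) 0 (q - 1) (caretMove hq₀ (0, 0) 0 (q - 1)) :=
    isCaretMove_root hq hq₀ (by omega)
  have hstep := (hx.inv hq₀).isReductionStep (f := f) hq hq₀
    (Or.inr (by rw [inv_inv]; exact caretMove_root_mem_caretMoves hq₀ (by omega))) hf
  rw [inv_inv] at hstep
  refine hstep (hleft.mul_caretMove hq hq₀ hmiddle hchild) (by omega) ?_ ?_
  · simpa [child] using hmem
  · have hroot : ∀ j, child q (0, 0) j = (j, 1) := by simp [child]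
    rw [hroot, hroot, offLeftWeight_last hq]
    exact zero_lt_one

theorem exists_isReductionStep (hq : 2 ≤ q) (hq₀ : 0 < q) (hf : f ∈ PLSet q)
    (hleft : IsLeftBelowFirstChild q f) (hI : I ∈ carets q f) (hI₀ : I.1 ≠ 0) :
    ∃ s, IsReductionStep hq₀ f s := by
  by_contra! hnone
  have hmiddle : ∀ i, 1 ≤ i → i < q - 1 → (i, 1) ∉ carets q f := fun i hi hiq hmem =>
    hnone _ (isReductionStep_of_middle_mem hq hq₀ hf hleft hi hiq hmem)
  have hchild : child q (q - 1, 1) 0 ∉ carets q f := fun hmem =>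
    hnone _ (isReductionStep_of_last_child_mem hq hq₀ hf hleft hmem)
  have hlast : (q - 1, 1) ∉ carets q f := fun hmem =>
    hnone _ (isReductionStep_of_last_mem hq hq₀ hf hleft hmiddle hchild hmem)
  obtain ⟨n, _ | d⟩ := I
  · exact hI₀ (by simpa [IsNode] using hI.1)
  have hancestor : (n / q ^ d, 1) ∈ carets q f :=
    mem_carets_of_descendant hq₀ (by rwa [add_comm])
  have hne_last : n / q ^ d ≠ q - 1 := fun h => hlast (h ▸ hancestor)
  have hlt : n / q ^ d < q := by simpa [IsNode] using hancestor.1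
  have hzero : n / q ^ d = 0 := by_contra fun hne =>
    hmiddle _ (Nat.pos_of_ne_zero hne) (lt_of_le_of_ne (Nat.le_pred_of_lt hlt) hne_last) hancestor
  exact hI₀ (hleft n d hI ((Nat.div_eq_zero_iff_lt (by positivity)).1 hzero))

theorem exists_near_carets_left (hq : 2 ≤ q) (hq₀ : 0 < q) (hf : f ∈ PLSet q) :
    ∃ f' ∈ PLSet q, (∀ I ∈ carets q f', I.1 = 0) ∧ carets q f'⁻¹ ⊆ carets q f⁻¹ ∧
      Near (caretMoves hq₀) (3 * numCarets q f) f f' := by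
  obtain ⟨g, hg, hfirst, hnum, hginv, hfg⟩ := exists_near_first_child_notMem hq hq₀ hf
  have step : ∀ h, (h ∈ PLSet q ∧ IsLeftBelowFirstChild q h ∧ carets q h⁻¹ ⊆ carets q g⁻¹) →
      (¬∀ I ∈ carets q h, I.1 = 0) → ∃ s, (s ∈ caretMoves hq₀ ∨ s⁻¹ ∈ caretMoves hq₀) ∧
        (h * s ∈ PLSet q ∧ IsLeftBelowFirstChild q (h * s) ∧
          carets q (h * s)⁻¹ ⊆ carets q g⁻¹) ∧
        caretSum q (offLeftWeight q) (h * s) < caretSum q (offLeftWeight q) h := by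
    intro h ⟨hh, hleft, hinv⟩ hnot
    push Not at hnot
    obtain ⟨I, hI, hI₀⟩ := hnot
    obtain ⟨s, hs⟩ := exists_isReductionStep hq hq₀ hh hleft hI hI₀
    exact ⟨s, hs.mem_caretMoves, ⟨hs.mul_mem_PLSet, hs.isLeftBelowFirstChild,
      hs.carets_inv_subset.trans hinv⟩, hs.caretSum_lt⟩
  obtain ⟨f', ⟨hf', -, hinv⟩, hleft, hgf⟩ := exists_near_of_descent _ step
    ⟨hg, isLeftBelowFirstChild_of_notMem hq₀ hfirst, subset_rfl⟩
  have hsum : caretSum q (offLeftWeight q) g ≤ 2 * numCarets q g :=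
    caretSum_le_mul_numCarets (finite_carets hq₀ hg)
      (fun I => by unfold offLeftWeight; split_ifs <;> omega)
  exact ⟨f', hf', hleft, hinv.trans hginv, (hfg.trans hgf).mono (by omega)⟩

end ReductionStep

section Rigidity

variable {q d n : ℕ} {f : Equiv.Perm ℝ} {I J : ℕ × ℕ}

theorem nodePoint_one_eq_succ (q n d : ℕ) : nodePoint q (n, d) 1 = nodePoint q (n + 1, d) 0 := by
  simp [nodePoint]

theorem MapsNode.nodePoint_le_apply (hq : 2 ≤ q) (hf : f ∈ PLSet q) (h : MapsNode q f I J)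
    (hI₀ : 1 ≤ I.1) (hIq : I.1 < q) (hright : f (nodePoint q I 1) = nodePoint q I 1) :
    nodePoint q I 0 ≤ f (nodePoint q I 0) := by
  have hq₀ : 0 < q := by omega
  have hends : nodePoint q J 1 = nodePoint q I 1 := by rw [← h.apply 1 (by simp), hright]
  rw [h.apply 0 (by simp)]
  simp only [nodePoint, add_div, add_zero] at hends ⊢
  obtain hle | hlt := le_or_gt I.2 J.2
  · have hlength : 1 / (q : ℝ) ^ J.2 ≤ 1 / (q : ℝ) ^ I.2 := by
      gcongr
      exact_mod_cast hq₀
    linarith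
  -- An image of larger size that ends at `(I.1 + 1) / q ^ I.2` would have to start at `0`.
  obtain ⟨j, hj⟩ := Nat.exists_eq_add_of_lt hlt
  have hscale : (J.1 + 1) * q ^ (j + 1) = I.1 + 1 := by
    rw [hj, add_assoc, pow_add, ← add_div, ← add_div] at hends
    field_simp at hends
    exact_mod_cast hends
  have hJ : J.1 ≠ 0 := fun hJ =>
    Nat.one_le_iff_ne_zero.1 hI₀ ((h.fst_eq_zero_iff hq₀ hf).2 hJ)
  have hpow : q ≤ q ^ (j + 1) := Nat.le_self_pow (by omega) q
  nlinarith [Nat.one_le_iff_ne_zero.2 hJ]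

theorem mapsNode_self_of_fix_right (hq : 2 ≤ q) (hf : f ∈ PLSet q) (hI : I ∉ carets q f)
    (hI' : I ∉ carets q f⁻¹) (hnode : IsNode q I) (hI₀ : 1 ≤ I.1) (hIq : I.1 < q)
    (hright : f (nodePoint q I 1) = nodePoint q I 1) : MapsNode q f I I := by
  obtain ⟨J, hJ⟩ := (notMem_carets_iff hnode).1 hI
  obtain ⟨K, hK⟩ := (notMem_carets_iff hnode).1 hI'
  have hle := hJ.nodePoint_le_apply hq hf hI₀ hIq hright
  have hle' := hK.nodePoint_le_apply hq (inv_mem_PLSet (by omega) hf) hI₀ hIq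
    (by rw [Equiv.Perm.inv_eq_iff_eq, hright])
  have hleft : f (nodePoint q I 0) = nodePoint q I 0 :=
    le_antisymm (by simpa using hf.1 hle') hle
  rw [hJ.apply 0 (by simp)] at hleft
  rw [hJ.apply 1 (by simp)] at hright
  rwa [eq_of_nodePoint_eq hq hleft hright] at hJ

theorem mapsNode_self_of_carets_left (hq : 2 ≤ q) (hf : f ∈ PLSet q)
    (hleft : ∀ I ∈ carets q f, I.1 = 0) (hleft' : ∀ I ∈ carets q f⁻¹, I.1 = 0)
    (hn : 1 ≤ n) (hnq : n < q) : MapsNode q f (n, d + 1) (n, d + 1) := by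
  have hnode : ∀ d, ∀ m < q, IsNode q (m, d + 1) := fun d m hm =>
    hm.trans_le (Nat.le_self_pow (by omega) q)
  have hstep : ∀ d m, 1 ≤ m → m < q →
      f (nodePoint q (m + 1, d + 1) 0) = nodePoint q (m + 1, d + 1) 0 →
        MapsNode q f (m, d + 1) (m, d + 1) := fun d m hm hmq hright =>
    mapsNode_self_of_fix_right hq hf (fun h => by have := hleft _ h; omega)
      (fun h => by have := hleft' _ h; omega) (hnode d m hmq) hm hmq
      (by rwa [nodePoint_one_eq_succ])
  have hrow : ∀ d, f (nodePoint q (1, d) 0) = nodePoint q (1, d) 0 → ∀ m, 1 ≤ m → m ≤ q →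
      f (nodePoint q (m, d + 1) 0) = nodePoint q (m, d + 1) 0 := fun d hd m hm hmq => by
    refine Nat.decreasingInduction' (fun k hk hmk hright => ?_) hmq ?_
    · exact (hstep d k (hm.trans hmk) hk hright).apply 0 (by simp)
    · have hpoint : nodePoint q (q, d + 1) 0 = nodePoint q (1, d) 0 := by
        simpa [child] using nodePoint_child (by omega) (1, d) 0 0
      rw [hpoint, hd]
  have hcol : ∀ d, f (nodePoint q (1, d) 0) = nodePoint q (1, d) 0 := fun d => by
    induction d with
    | zero => simpa [nodePoint] using hf.2.2.1 1 le_rfl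
    | succ d ih => exact hrow d ih 1 le_rfl (by omega)
  exact hstep d n hn hnq (hrow d (hcol d) _ (by omega) hnq)

theorem eq_one_of_carets_left (hq : 2 ≤ q) (hf : f ∈ PLSet q)
    (hleft : ∀ I ∈ carets q f, I.1 = 0) (hleft' : ∀ I ∈ carets q f⁻¹, I.1 = 0) : f = 1 := by
  ext t
  rw [Equiv.Perm.one_apply]
  obtain ht₀ | ht₀ := le_or_gt t 0
  · exact hf.2.1 t ht₀
  obtain ht₁ | ht₁ := le_or_gt 1 t
  · exact hf.2.2.1 t ht₁
  have hq₁ : (1 : ℝ) < q := by exact_mod_cast hq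
  obtain ⟨d, hdt, htd⟩ := exists_nat_pow_near_of_lt_one ht₀ ht₁.le
    (inv_pos.2 (zero_lt_one.trans hq₁)) (inv_lt_one_of_one_lt₀ hq₁)
  set s := t * (q : ℝ) ^ (d + 1)
  have hs₁ : 1 < s := by rwa [inv_pow, inv_lt_iff_one_lt_mul₀ (by positivity)] at hdt
  have hsq : s ≤ q := by
    rw [inv_pow, le_inv_comm₀ ht₀ (by positivity)] at htd
    calc s = t * (q : ℝ) ^ d * q := by ring
      _ ≤ 1 * q := by
        gcongr
        rwa [mul_comm, ← le_div_iff₀ ht₀, one_div]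
      _ = q := one_mul _
  obtain ⟨n, hn⟩ : ∃ n, ⌈s⌉₊ = n + 1 := Nat.exists_eq_succ_of_ne_zero
    (Nat.ceil_pos.2 (zero_lt_one.trans hs₁)).ne'
  have hn₁ : 1 < ⌈s⌉₊ := Nat.lt_ceil.2 (by exact_mod_cast hs₁)
  have hnq : ⌈s⌉₊ ≤ q := Nat.ceil_le.2 hsq
  have hns : (n : ℝ) < s := Nat.lt_ceil.1 (by omega)
  have hsn : s ≤ n + 1 := by exact_mod_cast hn ▸ Nat.le_ceil s
  have hfix := (mapsNode_self_of_carets_left (d := d) hq hf hleft hleft' (n := n) (by omega)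
    (by omega)).apply (s - n) ⟨by linarith, by linarith⟩
  rwa [nodePoint, add_sub_cancel, mul_div_cancel_right₀ _ (by positivity)] at hfix

end Rigidity

section QuasiIsometry

variable {p k q : ℕ} {f : Equiv.Perm ℝ} {S T : Set (Equiv.Perm ℝ)}

theorem near_one_of_mem_PLSet (hq : 2 ≤ q) (hq₀ : 0 < q) (hf : f ∈ PLSet q) :
    Near (caretMoves hq₀) (3 * treePairSize q f) 1 f := by
  obtain ⟨g, hg, hleft, hginv, hfg⟩ := exists_near_carets_left hq hq₀ hf
  obtain ⟨h, hh, hleft', hhinv, hgh⟩ :=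
    exists_near_carets_left hq hq₀ (inv_mem_PLSet hq₀ hg)
  rw [inv_inv] at hhinv
  obtain rfl : h = 1 := eq_one_of_carets_left hq hh hleft' fun I hI => hleft I (hhinv hI)
  have hone : Near (caretMoves hq₀) (3 * numCarets q g⁻¹) 1 g := by
    simpa using hgh.mul_left g
  have hnum : numCarets q g⁻¹ ≤ numCarets q f⁻¹ :=
    ncard_le_ncard hginv (finite_carets hq₀ (inv_mem_PLSet hq₀ hf))
  refine (hone.trans hfg.symm).mono ?_
  rw [treePairSize]
  omega

theorem exists_wordLength_le_mul_treePairSize (hq : 2 ≤ q)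
    (hS : (Subgroup.closure S : Set (Equiv.Perm ℝ)) = PLSet q) :
    ∃ c, ∀ f ∈ PLSet q, wordLength S f ≤ c * treePairSize q f := by
  have hq₀ : 0 < q := by omega
  obtain ⟨c, hc⟩ := (isSubadditiveOn_wordLength S).exists_le_mul_of_near
    (finite_caretMoves hq₀) (hS ▸ caretMoves_subset_PLSet hq₀)
  exact ⟨c * 3, fun f hf => (hc _ f (near_one_of_mem_PLSet hq hq₀ hf)).trans_eq
    (mul_assoc c 3 _).symm⟩

theorem exists_treePairSize_le_mul_wordLength (hq : 2 ≤ q) (hfin : T.Finite)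
    (hT : (Subgroup.closure T : Set (Equiv.Perm ℝ)) = PLSet q) :
    ∃ c, ∀ f ∈ PLSet q, treePairSize q f ≤ c * wordLength T f := by
  rw [← hT]
  exact (isSubadditiveOn_treePairSize hq hT).exists_le_mul_wordLength hfin
    Subgroup.subset_closure

theorem exists_wordLength_pow_le_mul_wordLength (hp : 2 ≤ p) (hk : 1 ≤ k)
    (hS : (Subgroup.closure S : Set (Equiv.Perm ℝ)) = PLSet (p ^ k)) (hfin : T.Finite)
    (hT : (Subgroup.closure T : Set (Equiv.Perm ℝ)) = PLSet p) :
    ∃ c, ∀ f ∈ PLSet (p ^ k), wordLength S f ≤ c * wordLength T f := by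
  have hq : 2 ≤ p ^ k := hp.trans (Nat.le_self_pow (by omega) p)
  obtain ⟨a, ha⟩ := exists_wordLength_le_mul_treePairSize hq hS
  obtain ⟨b, hb⟩ := exists_treePairSize_le_mul_wordLength hp hfin hT
  refine ⟨a * b, fun f hf => ?_⟩
  calc wordLength S f ≤ a * treePairSize (p ^ k) f := ha f hf
    _ ≤ a * treePairSize p f := by gcongr; exact treePairSize_pow_le hp hk hf
    _ ≤ a * (b * wordLength T f) := by gcongr; exact hb f (PLSet_pow_subset p k hf)
    _ = a * b * wordLength T f := (mul_assoc a b _).symm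

theorem exists_wordLength_le_mul_wordLength_of_closure_le {G : Type*} [Group G] {S T : Set G}
    (hfin : S.Finite) (hle : Subgroup.closure S ≤ Subgroup.closure T) :
    ∃ c, ∀ x ∈ Subgroup.closure S, wordLength T x ≤ c * wordLength S x :=
  (isSubadditiveOn_wordLength T).exists_le_mul_wordLength hfin
    (Subgroup.subset_closure.trans hle)

end QuasiIsometry

end Thompson

/-- Theorem 7. For `p ≥ 2` and `k ≥ 1`, realizing `F(p)` and `F(p^k)` as
groups of piecewise-linear homeomorphisms of `[0,1]`, `F(p^k)` is a subgroup of `F(p)`,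
and the inclusion is a quasi-isometric embedding with respect to any finite generating
sets `S` of `F(p^k)` and `T` of `F(p)`. -/
theorem statement3 (p k : ℕ) (hp : 2 ≤ p) (hk : 1 ≤ k) :
    PLSet (p ^ k) ⊆ PLSet p ∧
      ∀ S T : Finset (Equiv.Perm ℝ),
        ((Subgroup.closure (S : Set (Equiv.Perm ℝ)) : Subgroup (Equiv.Perm ℝ)) :
            Set (Equiv.Perm ℝ)) = PLSet (p ^ k) →
        ((Subgroup.closure (T : Set (Equiv.Perm ℝ)) : Subgroup (Equiv.Perm ℝ)) :
            Set (Equiv.Perm ℝ)) = PLSet p →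
        ∃ C : ℝ, 1 ≤ C ∧ ∀ x ∈ PLSet (p ^ k),
          (1 / C) * (wordLength (S : Set (Equiv.Perm ℝ)) x : ℝ) ≤
              (wordLength (T : Set (Equiv.Perm ℝ)) x : ℝ) ∧
            (wordLength (T : Set (Equiv.Perm ℝ)) x : ℝ) ≤
              C * (wordLength (S : Set (Equiv.Perm ℝ)) x : ℝ) := by
  refine ⟨Thompson.PLSet_pow_subset p k, fun S T hS hT => ?_⟩
  have hle : Subgroup.closure (S : Set (Equiv.Perm ℝ)) ≤ Subgroup.closure T := fun x hx => by
    rw [← SetLike.mem_coe, hS] at hx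
    rw [← SetLike.mem_coe, hT]
    exact Thompson.PLSet_pow_subset p k hx
  obtain ⟨a, ha⟩ :=
    Thompson.exists_wordLength_pow_le_mul_wordLength hp hk hS T.finite_toSet hT
  obtain ⟨b, hb⟩ :=
    Thompson.exists_wordLength_le_mul_wordLength_of_closure_le S.finite_toSet hle
  have ha₁ : (a : ℝ) ≤ 1 + a + b := by linarith [b.cast_nonneg (α := ℝ)]
  have hb₁ : (b : ℝ) ≤ 1 + a + b := by linarith [a.cast_nonneg (α := ℝ)]
  refine ⟨1 + a + b, by linarith [a.cast_nonneg (α := ℝ)], fun x hx => ⟨?_, ?_⟩⟩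
  · rw [one_div, inv_mul_le_iff₀ (by positivity)]
    refine le_trans ?_ (mul_le_mul_of_nonneg_right ha₁ (Nat.cast_nonneg _))
    exact_mod_cast ha x hx
  · refine le_trans ?_ (mul_le_mul_of_nonneg_right hb₁ (Nat.cast_nonneg _))
    rw [← hS] at hx
    exact_mod_cast hb x hx
end
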